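/- arXiv:1609.07531 — 2 statements merged into one kernel-verified Lean document; each statement's English description precedes it below -/
import Mathlib

section
/- Let N be a matching in G that admits a 2-level witness. Then every popular matching T in G satisfies |T(u)| ≤ |N(u)| for every vertex u ∈ A∪B; in particular |T| ≤ |N|, so N is a maximum-size popular matching in G. -/
/-!
Many-to-many matchings with two-sided preferences, votes, and popularity,
following "Popular Matchings in the Many-to-Many Setting".
-/

/-- The vote of a vertex with rank function `r` (smaller rank = more preferred)
comparing two options, where `none` stands for `null` (ranked below everything). -/
def vote {β : Type*} [DecidableEq β] (r : β → ℕ) : Option β → Option β → ℤ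
  | none, none => 0
  | some _, none => 1
  | none, some _ => -1
  | some x, some y => if x = y then 0 else if r x < r y then 1 else -1

/-- The common length `k` of the arrays compared in `δ_u(S₀,S₁)`:
after padding the smaller of `S₀, S₁` with nulls and removing common elements. -/
def kOf {β : Type*} [DecidableEq β] (S₀ S₁ : Finset β) : ℕ :=
  max S₀.card S₁.card - (S₀ ∩ S₁).card

/-- `S₀ ∖ S₁`, viewed as an array of `Option`s padded with `none` (null) to length `k`. -/
noncomputable def padded {β : Type*} [DecidableEq β] (S₀ S₁ : Finset β) (k : ℕ) : List (Option β) :=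
  ((S₀ \ S₁).toList.map some) ++ List.replicate (k - (S₀ \ S₁).card) none

/-- `δ_u(S₀,S₁)`: the minimum, over all permutations `σ` of `{1,…,k}`, of
`Σ_i vote_u(S'₀[i], S'₁[σ(i)])`. -/
noncomputable def deltaSet {β : Type*} [DecidableEq β] (r : β → ℕ) (S₀ S₁ : Finset β) : ℤ :=
  Finset.univ.inf' ⟨1, Finset.mem_univ 1⟩ fun σ : Equiv.Perm (Fin (kOf S₀ S₁)) =>
    ∑ i : Fin (kOf S₀ S₁),
      vote r ((padded S₀ S₁ (kOf S₀ S₁)).getD (i : ℕ) none)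
             ((padded S₁ S₀ (kOf S₀ S₁)).getD (σ i : ℕ) none)

/-- A bipartite instance `G = (A ∪ B, E)` with capacities `≥ 1` and strict
preferences of every vertex over its neighbors (given by injective-on-neighbors
rank functions; smaller rank = more preferred). -/
structure PrefInstance (α β : Type*) [Fintype α] [Fintype β] [DecidableEq α] [DecidableEq β] where
  E : Finset (α × β)
  capA : α → ℕ
  capB : β → ℕ
  rankA : α → β → ℕ
  rankB : β → α → ℕ
  capA_pos : ∀ a, 1 ≤ capA a
  capB_pos : ∀ b, 1 ≤ capB b
  rankA_injOn : ∀ a, Set.InjOn (rankA a) {b | (a, b) ∈ E}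
  rankB_injOn : ∀ b, Set.InjOn (rankB b) {a | (a, b) ∈ E}

namespace PrefInstance

variable {α β : Type*} [Fintype α] [Fintype β] [DecidableEq α] [DecidableEq β]

/-- `M(a)`: the set of `B`-vertices matched to `a` in `M`. -/
def rowSet (M : Finset (α × β)) (a : α) : Finset β :=
  Finset.univ.filter fun b => (a, b) ∈ M

/-- `M(b)`: the set of `A`-vertices matched to `b` in `M`. -/
def colSet (M : Finset (α × β)) (b : β) : Finset α :=
  Finset.univ.filter fun a => (a, b) ∈ M

variable (I : PrefInstance α β)

/-- `M` is a matching in `G`: a subset of `E` respecting all capacities. -/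
def IsMatching (M : Finset (α × β)) : Prop :=
  M ⊆ I.E ∧ (∀ a, (rowSet M a).card ≤ I.capA a) ∧ (∀ b, (colSet M b).card ≤ I.capB b)

/-- `Δ_a(M₀,M₁) = δ_a(M₀(a), M₁(a))` for `a ∈ A`. -/
noncomputable def DeltaA (M₀ M₁ : Finset (α × β)) (a : α) : ℤ :=
  deltaSet (I.rankA a) (rowSet M₀ a) (rowSet M₁ a)

/-- `Δ_b(M₀,M₁) = δ_b(M₀(b), M₁(b))` for `b ∈ B`. -/
noncomputable def DeltaB (M₀ M₁ : Finset (α × β)) (b : β) : ℤ :=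
  deltaSet (I.rankB b) (colSet M₀ b) (colSet M₁ b)

/-- `Δ(M₀,M₁) = Σ_{u ∈ A∪B} Δ_u(M₀,M₁)`. -/
noncomputable def Delta (M₀ M₁ : Finset (α × β)) : ℤ :=
  (∑ a, I.DeltaA M₀ M₁ a) + ∑ b, I.DeltaB M₀ M₁ b

/-- `M` is a popular matching: `Δ(M,T) ≥ 0` against every matching `T`. -/
def Popular (M : Finset (α × β)) : Prop :=
  I.IsMatching M ∧ ∀ T, I.IsMatching T → 0 ≤ I.Delta M T

/-- `M` is a weakly popular matching: `Δ(T,M) ≤ 0` for every matching `T`. -/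
def WeaklyPopular (M : Finset (α × β)) : Prop :=
  I.IsMatching M ∧ ∀ T, I.IsMatching T → I.Delta T M ≤ 0

/-- The edge `(a,b) ∈ E ∖ M` blocks `M`. -/
def Blocks (M : Finset (α × β)) (a : α) (b : β) : Prop :=
  (a, b) ∈ I.E ∧ (a, b) ∉ M ∧
  ((rowSet M a).card < I.capA a ∨ ∃ b' ∈ rowSet M a, I.rankA a b < I.rankA a b') ∧
  ((colSet M b).card < I.capB b ∨ ∃ a' ∈ colSet M b, I.rankB b a < I.rankB b a')

/-- `M` is a pairwise-stable matching: no edge blocks it. -/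
def Stable (M : Finset (α × β)) : Prop :=
  I.IsMatching M ∧ ∀ a b, ¬ I.Blocks M a b

end PrefInstance
namespace PrefInstance

variable {α β : Type*} [Fintype α] [Fintype β] [DecidableEq α] [DecidableEq β]
variable (I : PrefInstance α β)

/-- `A'`: the set of clones `a_i`, `1 ≤ i ≤ cap(a)`, of the vertices of `A`. -/
abbrev CloneA := (a : α) × Fin (I.capA a)

/-- `B'`: the set of clones `b_j`, `1 ≤ j ≤ cap(b)`, of the vertices of `B`. -/
abbrev CloneB := (b : β) × Fin (I.capB b)

/-- `N'` is a realization of the matching `N` on the cloned vertex sets: a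
(one-to-one) matching on `A' × B'` whose projection is a bijection onto `N`. -/
def IsRealization (N : Finset (α × β)) (N' : Finset (I.CloneA × I.CloneB)) : Prop :=
  (∀ e ∈ N', ∀ f ∈ N', e.1 = f.1 → e = f) ∧
  (∀ e ∈ N', ∀ f ∈ N', e.2 = f.2 → e = f) ∧
  N'.image (fun e => (e.1.1, e.2.1)) = N ∧
  N'.card = N.card

/-- The partner of `x ∈ A'` in a one-to-one matching `N'` on clones (`none` if unmatched,
i.e. matched to the last resort `ℓ(x)` in `N*`). -/
noncomputable def partnerA (N' : Finset (I.CloneA × I.CloneB)) (x : I.CloneA) :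
    Option I.CloneB :=
  if h : ∃ y, (x, y) ∈ N' then some h.choose else none

/-- The partner of `y ∈ B'` in a one-to-one matching `N'` on clones (`none` if unmatched). -/
noncomputable def partnerB (N' : Finset (I.CloneA × I.CloneB)) (y : I.CloneB) :
    Option I.CloneA :=
  if h : ∃ x, (x, y) ∈ N' then some h.choose else none

/-- `(x, y) ∈ A' × B'` is an edge of the graph `G'_N`: either the underlying pair is an
edge of `E ∖ N` (all clone copies present), or `(x,y)` is the unique copy in `N'` of an
edge of `N`. -/
def GNEdge (N : Finset (α × β)) (N' : Finset (I.CloneA × I.CloneB))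
    (x : I.CloneA) (y : I.CloneB) : Prop :=
  ((x.1, y.1) ∈ I.E ∧ (x.1, y.1) ∉ N) ∨ (x, y) ∈ N'

/-- The weight `wt_N(x,y) = vote_a(b, N*(a_i)) + vote_b(a, N*(b_j))` of an edge of `G'_N`
lying in `A' × B'` (a last-resort partner in `N*` is read as null). -/
noncomputable def wtE (N' : Finset (I.CloneA × I.CloneB))
    (x : I.CloneA) (y : I.CloneB) : ℤ :=
  vote (I.rankA x.1) (some y.1) (Option.map Sigma.fst (I.partnerA N' x)) +
  vote (I.rankB y.1) (some x.1) (Option.map Sigma.fst (I.partnerB N' y))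

/-- A one-to-one matching on the clone sets (each clone is in at most one edge).
Together with the implicit last-resort edges for unmatched clones, this represents
an `(A' ∪ B')`-complete matching in `G'_N`. -/
def IsCloneMatching (T' : Finset (I.CloneA × I.CloneB)) : Prop :=
  (∀ e ∈ T', ∀ f ∈ T', e.1 = f.1 → e = f) ∧ (∀ e ∈ T', ∀ f ∈ T', e.2 = f.2 → e = f)

/-- The weight `wt_N` of the `(A' ∪ B')`-complete matching represented by `T'`:
the sum of the weights of its `A' × B'` edges plus, for every clone left unmatched
in `T'` (hence matched to its last resort), the weight `wt_N(v, ℓ(v))`, which is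
`-1` if `v` is matched in `N'` and `0` otherwise. -/
noncomputable def wtTotal (N' T' : Finset (I.CloneA × I.CloneB)) : ℤ :=
  (∑ e ∈ T', I.wtE N' e.1 e.2) +
  (∑ x : I.CloneA,
    if ∀ y, (x, y) ∉ T' then (if ∃ y, (x, y) ∈ N' then (-1 : ℤ) else 0) else 0) +
  (∑ y : I.CloneB,
    if ∀ x, (x, y) ∉ T' then (if ∃ x, (x, y) ∈ N' then (-1 : ℤ) else 0) else 0)

/-- A 2-level witness for `N` (with realization `N'`): partitions
`A' = A'₀ ∪ A'₁` and `B' = B'₀ ∪ B'₁` (encoded by level functions `lA, lB`, where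
`true` means level 1) such that clones of `A'` unmatched in `N'` are in `A'₁`, clones
of `B'` unmatched in `N'` are in `B'₀`, `N' ⊆ (A'₀ × B'₀) ∪ (A'₁ × B'₁)`, every edge
of `G'_N` in `A'₁ × B'₀` has weight `-2`, and every edge of `G'_N` in
`(A'₀ × B'₀) ∪ (A'₁ × B'₁)` has weight `≤ 0`. -/
def TwoLevelWitness (N : Finset (α × β)) (N' : Finset (I.CloneA × I.CloneB))
    (lA : I.CloneA → Bool) (lB : I.CloneB → Bool) : Prop :=
  (∀ x : I.CloneA, (∀ y, (x, y) ∉ N') → lA x = true) ∧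
  (∀ y : I.CloneB, (∀ x, (x, y) ∉ N') → lB y = false) ∧
  (∀ e ∈ N', lA e.1 = lB e.2) ∧
  (∀ x y, I.GNEdge N N' x y → lA x = true → lB y = false → I.wtE N' x y = -2) ∧
  (∀ x y, I.GNEdge N N' x y → lA x = lB y → I.wtE N' x y ≤ 0)

end PrefInstance

/-!
Fix a matching `T` and compare it with `N` by optimal permutations at every vertex. These
permutations prescribe a realization `T'` of `T` inside `G'_N` with `wt_N(T') = -Δ(N, T)`. The
levels of the witness define a feasible solution of value `0` of the dual of the maximum-weight
complete matching problem in `G'_N`, so `wt_N(T') ≤ 0` and `N` is popular. If also `Δ(N, T) ≤ 0`,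
then `T'` is optimal and all its edges are tight. An edge with an endpoint unmatched in `N'` is
never tight, so every clone matched in `T'` is matched in `N'`; this bounds `|T(u)|` by `|N(u)|`.
A popular `T` satisfies `Δ(N, T) ≤ 0` because `Δ(T, N) ≤ -Δ(N, T)`.
-/

/-! ### Votes -/

section Vote

variable {L : Type*} [DecidableEq L]

lemma vote_self (r : L → ℕ) (x : Option L) : vote r x x = 0 := by
  cases x <;> simp [vote]

lemma vote_none_left (r : L → ℕ) (y : Option L) :
    vote r none y = if y = none then 0 else -1 := by
  cases y <;> simp [vote]

lemma neg_one_le_vote (r : L → ℕ) (x y : Option L) : -1 ≤ vote r x y := by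
  cases x <;> cases y <;> simp only [vote] <;> grind

lemma vote_le_one (r : L → ℕ) (x y : Option L) : vote r x y ≤ 1 := by
  cases x <;> cases y <;> simp only [vote] <;> grind

lemma vote_swap {r : L → ℕ} {s : Set L} (hr : s.InjOn r) {x y : Option L}
    (hx : ∀ b ∈ x, b ∈ s) (hy : ∀ b ∈ y, b ∈ s) : vote r y x = -vote r x y := by
  cases x with
  | none => cases y <;> simp [vote]
  | some b =>
    cases y with
    | none => simp [vote]
    | some c =>
      have : r b = r c → b = c := fun h => hr (hx b rfl) (hy c rfl) h
      simp only [vote]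
      grind

lemma kOf_comm (S T : Finset L) : kOf S T = kOf T S := by
  rw [kOf, kOf, max_comm, Finset.inter_comm]

lemma kOf_add_card_inter (S T : Finset L) : kOf S T + (S ∩ T).card = max S.card T.card :=
  Nat.sub_add_cancel <|
    (Finset.card_le_card Finset.inter_subset_left).trans (le_max_left _ _)

lemma card_sdiff_le_kOf (S T : Finset L) : (S \ T).card ≤ kOf S T := by
  have := Finset.card_sdiff_add_card_inter S T
  have := kOf_add_card_inter S T
  omega

lemma padded_getD (S T : Finset L) (k i : ℕ) :
    (padded S T k).getD i none = (S \ T).toList[i]? := by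
  rw [padded, List.getD_eq_getElem?_getD, List.getElem?_append]
  split_ifs with h
  · rw [List.getElem?_map]
    cases (S \ T).toList[i]? <;> rfl
  · simp only [List.length_map, not_lt] at h
    simp only [List.getElem?_replicate, List.getElem?_eq_none h]
    split_ifs <;> rfl

/-- Reversing the comparison negates the votes but replaces a minimum by a maximum. -/
lemma deltaSet_swap_le {r : L → ℕ} {s : Set L} (hr : s.InjOn r) {S T : Finset L}
    (hS : ↑S ⊆ s) (hT : ↑T ⊆ s) : deltaSet r T S ≤ -deltaSet r S T := by
  have mem_of_getD (S T : Finset L) (hS : ↑S ⊆ s) (k i : ℕ) :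
      ∀ b ∈ (padded S T k).getD i none, b ∈ s := by
    intro b hb
    rw [padded_getD, Option.mem_def] at hb
    exact hS (Finset.mem_sdiff.1 (Finset.mem_toList.1 (List.mem_of_getElem? hb))).1
  have hTS : deltaSet r T S ≤ ∑ i : Fin (kOf S T), vote r
      ((padded T S (kOf S T)).getD i none) ((padded S T (kOf S T)).getD i none) := by
    rw [kOf_comm S T]
    exact Finset.inf'_le _ (Finset.mem_univ 1)
  have hST : deltaSet r S T ≤ ∑ i : Fin (kOf S T), vote r
      ((padded S T (kOf S T)).getD i none) ((padded T S (kOf S T)).getD i none) :=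
    Finset.inf'_le _ (Finset.mem_univ 1)
  simp only [vote_swap hr (mem_of_getD S T hS _ _) (mem_of_getD T S hT _ _),
    Finset.sum_neg_distrib] at hTS
  linarith

end Vote

/-! ### Labellings of the clones of one vertex -/

/-- The labelling `q` of a set of clones by partners, where `none` stands for an unmatched clone,
realizes the set of partners `S`: every element of `S` labels exactly one clone, and no other
partner occurs. -/
structure IsLabelling {C L : Type*} (q : C → Option L) (S : Finset L) : Prop where
  mem_iff : ∀ b, b ∈ S ↔ ∃ c, q c = some b
  injective : ∀ {c c' b}, q c = some b → q c' = some b → c = c'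

namespace IsLabelling

variable {C D L : Type*} {p : C → Option L} {q : D → Option L} {S T : Finset L}

lemma mem_of_eq_some (hp : IsLabelling p S) {c : C} {b : L} (h : p c = some b) : b ∈ S :=
  (hp.mem_iff b).2 ⟨c, h⟩

lemma const_none : IsLabelling (fun _ : C => (none : Option L)) ∅ where
  mem_iff := by simp
  injective := by simp

lemma subtype_val (S : Finset L) : IsLabelling (fun b : S => some b.1) S where
  mem_iff := by simp
  injective h h' := Subtype.ext (Option.some.inj (h.trans h'.symm))

lemma getElem?_toList (S : Finset L) {k : ℕ} (hk : S.card ≤ k) :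
    IsLabelling (fun i : Fin k => S.toList[(i : ℕ)]?) S where
  mem_iff b := by
    rw [← Finset.mem_toList, List.mem_iff_getElem?]
    refine ⟨fun ⟨i, hi⟩ => ?_, fun ⟨i, hi⟩ => ⟨i, hi⟩⟩
    have : i < S.toList.length := (List.getElem?_eq_some_iff.1 hi).1
    exact ⟨⟨i, by grind [Finset.length_toList]⟩, hi⟩
  injective h h' := Fin.ext <|
    (List.getElem?_inj (List.getElem?_eq_some_iff.1 h).1 S.nodup_toList).1 (h.trans h'.symm)

lemma padded_getD [DecidableEq L] {k : ℕ} (hk : (S \ T).card ≤ k) :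
    IsLabelling (fun i : Fin k => (padded S T k).getD i none) (S \ T) := by
  simpa only [_root_.padded_getD] using getElem?_toList _ hk

lemma sumElim [DecidableEq L] (hp : IsLabelling p S) (hq : IsLabelling q T)
    (hST : Disjoint S T) : IsLabelling (Sum.elim p q) (S ∪ T) where
  mem_iff b := by simp [hp.mem_iff, hq.mem_iff]
  injective {c c' b} h h' := by
    have not_both {c : C} {d : D} (hc : p c = some b) (hd : q d = some b) : False :=
      Finset.disjoint_left.1 hST (hp.mem_of_eq_some hc) (hq.mem_of_eq_some hd)
    rcases c with c | d <;> rcases c' with c' | d'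
    · exact congrArg _ (hp.injective h h')
    · exact (not_both h h').elim
    · exact (not_both h' h).elim
    · exact congrArg _ (hq.injective h h')

lemma eq_of_fst_eq {ι : Type*} {κ : ι → Type*} {p : (i : ι) × κ i → Option L} {S : ι → Finset L}
    (hp : ∀ i, IsLabelling (fun k => p ⟨i, k⟩) (S i)) {x x' : (i : ι) × κ i} {b : L}
    (h : p x = some b) (h' : p x' = some b) (hx : x.1 = x'.1) : x = x' := by
  obtain ⟨i, k⟩ := x
  obtain ⟨i', k'⟩ := x'
  obtain rfl : i = i' := hx
  rw [(hp i).injective h h']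

lemma comp_equiv (hq : IsLabelling q S) (e : C ≃ D) : IsLabelling (q ∘ e) S where
  mem_iff b := by simp [hq.mem_iff, e.surjective.exists]
  injective h h' := e.injective (hq.injective h h')

lemma exists_equiv [Fintype C] [Fintype D] (hp : IsLabelling p S) (hq : IsLabelling q S)
    (hcard : Fintype.card C = Fintype.card D) : ∃ e : C ≃ D, q ∘ e = p := by
  have matched (c : C) : ∃ d, p c ≠ none → q d = p c := by
    cases hc : p c with
    | none =>
      have : Nonempty D := Fintype.card_pos_iff.1 (hcard ▸ Fintype.card_pos_iff.2 ⟨c⟩)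
      exact ⟨Classical.arbitrary D, by simp⟩
    | some b =>
      obtain ⟨d, hd⟩ := (hq.mem_iff b).1 (hp.mem_of_eq_some hc)
      exact ⟨d, fun _ => hd⟩
  choose f hf using matched
  have f_injOn : Set.InjOn f {c | p c ≠ none} := by
    intro c hc c' hc' h
    obtain ⟨b, hb⟩ := Option.ne_none_iff_exists'.1 hc
    have : p c' = p c := by rw [← hf c hc, ← hf c' hc', h]
    exact hp.injective hb (this.trans hb)
  obtain ⟨g, hg⟩ := Set.MapsTo.exists_equiv_extend_of_card_eq (t := Finset.univ) hcard
    (fun c _ => Finset.mem_coe.2 (Finset.mem_univ (f c))) f_injOn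
  have hqg (c : C) (hc : p c ≠ none) : q (g c) = p c := by rw [hg c hc, hf c hc]
  refine ⟨g.trans (Equiv.subtypeUnivEquiv Finset.mem_univ), funext fun c => ?_⟩
  change q (g c) = p c
  by_cases hc : p c = none
  · rw [hc, Option.eq_none_iff_forall_ne_some]
    intro b hb
    obtain ⟨c', hc'⟩ := (hp.mem_iff b).1 (hq.mem_of_eq_some hb)
    have : g c = g c' := Subtype.ext (hq.injective hb ((hqg c' (by simp [hc'])).trans hc'))
    simp [g.injective this, hc'] at hc
  · exact hqg c hc

lemma card_le_fintypeCard [Fintype C] (hp : IsLabelling p S) : S.card ≤ Fintype.card C := by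
  refine Finset.card_le_card_of_forall_subsingleton (t := Finset.univ)
    (fun b c => p c = some b) (fun b hb => ?_) ?_
  · simpa using (hp.mem_iff b).1 hb
  · rintro c - b ⟨-, hb⟩ b' ⟨-, hb'⟩
    exact Option.some.inj (hb.symm.trans hb')

lemma card_mono {q : C → Option L} (hp : IsLabelling p S) (hq : IsLabelling q T)
    (h : ∀ c, q c ≠ none → p c ≠ none) : T.card ≤ S.card := by
  refine Finset.card_le_card_of_forall_subsingleton
    (fun b b' => ∃ c, q c = some b ∧ p c = some b') (fun b hb => ?_) ?_
  · obtain ⟨c, hc⟩ := (hq.mem_iff b).1 hb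
    obtain ⟨b', hb'⟩ := Option.ne_none_iff_exists'.1 (h c (by simp [hc]))
    exact ⟨b', hp.mem_of_eq_some hb', c, hc, hb'⟩
  · rintro b' - b₁ ⟨-, c₁, hq₁, hp₁⟩ b₂ ⟨-, c₂, hq₂, hp₂⟩
    rw [hp.injective hp₁ hp₂] at hq₁
    exact Option.some.inj (hq₁.symm.trans hq₂)

/-- The index set `K`, the common partners and enough unmatched clones together carry labellings
realizing `S` and `T`. Identifying them with the given clones by their labels in `S` turns the
labelling realizing `T` into `q`. -/
lemma exists_of_sdiff [Fintype C] [DecidableEq L] (hp : IsLabelling p S) {K : Type*} [Fintype K]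
    {u v : K → Option L} (hu : IsLabelling u (S \ T)) (hv : IsLabelling v (T \ S))
    (hK : Fintype.card K + (S ∩ T).card ≤ Fintype.card C) :
    ∃ q : C → Option L, IsLabelling q T ∧ (∀ c, ∀ b ∈ T, p c = some b → q c = some b) ∧
      ∀ f : Option L → Option L → ℤ, (∀ x, f x x = 0) →
        ∑ c, f (p c) (q c) = ∑ i, f (u i) (v i) := by
  let m := Fintype.card C - (Fintype.card K + (S ∩ T).card)
  let common : ↥(S ∩ T) ⊕ Fin m → Option L := Sum.elim (fun b => some b.1) fun _ => none
  have hcommon : IsLabelling common (S ∩ T) := by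
    simpa using (subtype_val (S ∩ T)).sumElim (const_none (C := Fin m)) (by simp)
  have hS : IsLabelling (Sum.elim u common) S := by
    simpa only [Finset.sdiff_union_inter] using
      hu.sumElim hcommon (Finset.disjoint_sdiff_inter S T)
  have hT : IsLabelling (Sum.elim v common) T := by
    have hdisj : Disjoint (T \ S) (S ∩ T) :=
      Finset.sdiff_disjoint.mono_right Finset.inter_subset_left
    have hunion : T \ S ∪ S ∩ T = T := by grind
    simpa only [hunion] using hv.sumElim hcommon hdisj
  obtain ⟨e, rfl⟩ := hp.exists_equiv hS (by
    simp only [Fintype.card_sum, Fintype.card_fin, Fintype.card_coe, m]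
    omega)
  refine ⟨Sum.elim v common ∘ e, hT.comp_equiv e, fun c b hb hc => ?_, fun f hf => ?_⟩
  · simp only [Function.comp_apply] at hc ⊢
    cases hec : e c with
    | inl i =>
      rw [hec] at hc
      exact absurd hb (Finset.mem_sdiff.1 (hu.mem_of_eq_some hc)).2
    | inr d => rwa [hec] at hc
  · calc ∑ c, f (Sum.elim u common (e c)) (Sum.elim v common (e c))
        = ∑ d, f (Sum.elim u common d) (Sum.elim v common d) :=
          e.sum_comp fun d => f (Sum.elim u common d) (Sum.elim v common d)
      _ = ∑ i, f (u i) (v i) := by simp [hf]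

lemma exists_sum_vote_eq [Fintype C] [DecidableEq L] (hp : IsLabelling p S)
    (hT : T.card ≤ Fintype.card C) {r : L → ℕ} {s : Set L} (hr : s.InjOn r)
    (hSs : ↑S ⊆ s) (hTs : ↑T ⊆ s) :
    ∃ q : C → Option L, IsLabelling q T ∧ (∀ c, ∀ b ∈ T, p c = some b → q c = some b) ∧
      ∑ c, vote r (q c) (p c) = -deltaSet r S T := by
  obtain ⟨σ, -, hσ⟩ := Finset.exists_mem_eq_inf' (s := Finset.univ) ⟨1, Finset.mem_univ 1⟩
    fun σ : Equiv.Perm (Fin (kOf S T)) => ∑ i : Fin (kOf S T),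
      vote r ((padded S T (kOf S T)).getD i none) ((padded T S (kOf S T)).getD (σ i) none)
  have hcard : Fintype.card (Fin (kOf S T)) + (S ∩ T).card ≤ Fintype.card C := by
    rw [Fintype.card_fin, kOf_add_card_inter]
    exact max_le hp.card_le_fintypeCard hT
  obtain ⟨q, hq, hpq, hsum⟩ := hp.exists_of_sdiff (padded_getD (card_sdiff_le_kOf S T))
    ((padded_getD ((card_sdiff_le_kOf T S).trans_eq (kOf_comm T S))).comp_equiv σ) hcard
  refine ⟨q, hq, hpq, ?_⟩
  rw [deltaSet, hσ]
  refine Eq.trans ?_ (congrArg Neg.neg (hsum (vote r) (vote_self r)))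
  rw [← Finset.sum_neg_distrib]
  exact Finset.sum_congr rfl fun c _ => vote_swap hr (fun b hb => hSs (hp.mem_of_eq_some hb))
    fun b hb => hTs (hq.mem_of_eq_some hb)

end IsLabelling

namespace PrefInstance

variable {α β : Type*} [DecidableEq α] [DecidableEq β]

/-! ### Clone matchings -/

section CloneMatching

variable [Fintype α] [Fintype β] (I : PrefInstance α β)

/-- The label of the clone `x ∈ A'` under `M`: the vertex of `B` underlying its partner. -/
noncomputable def labelA (M : Finset (I.CloneA × I.CloneB)) (x : I.CloneA) : Option β :=
  (I.partnerA M x).map Sigma.fst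

/-- The label of the clone `y ∈ B'` under `M`: the vertex of `A` underlying its partner. -/
noncomputable def labelB (M : Finset (I.CloneA × I.CloneB)) (y : I.CloneB) : Option α :=
  (I.partnerB M y).map Sigma.fst

variable {I} {M N' : Finset (I.CloneA × I.CloneB)} {x : I.CloneA} {y : I.CloneB}

lemma labelA_eq_none_iff : I.labelA M x = none ↔ ∀ y, (x, y) ∉ M := by
  simp [labelA, partnerA, -Sigma.exists]

lemma labelB_eq_none_iff : I.labelB M y = none ↔ ∀ x, (x, y) ∉ M := by
  simp [labelB, partnerB, -Sigma.exists]

namespace IsCloneMatching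

lemma labelA_eq_some_iff (hM : I.IsCloneMatching M) {b : β} :
    I.labelA M x = some b ↔ ∃ j, (x, ⟨b, j⟩) ∈ M := by
  have partnerA_eq (y) (hy : (x, y) ∈ M) : I.partnerA M x = some y := by
    have hex : ∃ y, (x, y) ∈ M := ⟨y, hy⟩
    rw [partnerA, dif_pos hex]
    exact congrArg (fun e => some e.2) (hM.1 _ hex.choose_spec _ hy rfl)
  constructor
  · intro h
    obtain ⟨y, hy⟩ : ∃ y, (x, y) ∈ M := by
      by_contra! hM'
      simp [labelA_eq_none_iff.2 hM'] at h
    rw [labelA, partnerA_eq y hy] at h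
    obtain rfl : y.1 = b := Option.some.inj h
    exact ⟨y.2, hy⟩
  · rintro ⟨j, hj⟩
    rw [labelA, partnerA_eq _ hj, Option.map_some]

lemma labelB_eq_some_iff (hM : I.IsCloneMatching M) {a : α} :
    I.labelB M y = some a ↔ ∃ i, (⟨a, i⟩, y) ∈ M := by
  have partnerB_eq (x) (hx : (x, y) ∈ M) : I.partnerB M y = some x := by
    have hex : ∃ x, (x, y) ∈ M := ⟨x, hx⟩
    rw [partnerB, dif_pos hex]
    exact congrArg (fun e => some e.1) (hM.2 _ hex.choose_spec _ hx rfl)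
  constructor
  · intro h
    obtain ⟨x, hx⟩ : ∃ x, (x, y) ∈ M := by
      by_contra! hM'
      simp [labelB_eq_none_iff.2 hM'] at h
    rw [labelB, partnerB_eq x hx] at h
    obtain rfl : x.1 = a := Option.some.inj h
    exact ⟨x.2, hx⟩
  · rintro ⟨i, hi⟩
    rw [labelB, partnerB_eq _ hi, Option.map_some]

lemma sum_cloneA (hM : I.IsCloneMatching M) (F : I.CloneA → ℤ) :
    ∑ x, F x = ∑ e ∈ M, F e.1 + ∑ x, if ∀ y, (x, y) ∉ M then F x else 0 := by
  have hinj : Set.InjOn Prod.fst (M : Set (I.CloneA × I.CloneB)) :=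
    fun e he f hf h => hM.1 e he f hf h
  rw [← Finset.sum_image hinj, ← Finset.sum_add_sum_compl (M.image Prod.fst) F,
    ← Finset.sum_filter]
  congr 2
  ext x
  simp [-Sigma.exists]

lemma sum_cloneB (hM : I.IsCloneMatching M) (G : I.CloneB → ℤ) :
    ∑ y, G y = ∑ e ∈ M, G e.2 + ∑ y, if ∀ x, (x, y) ∉ M then G y else 0 := by
  have hinj : Set.InjOn Prod.snd (M : Set (I.CloneA × I.CloneB)) :=
    fun e he f hf h => hM.2 e he f hf h
  rw [← Finset.sum_image hinj, ← Finset.sum_add_sum_compl (M.image Prod.snd) G,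
    ← Finset.sum_filter]
  congr 2
  ext y
  simp [-Sigma.exists]

lemma wtTotal_eq_sum_vote (hM : I.IsCloneMatching M) :
    I.wtTotal N' M = ∑ x, vote (I.rankA x.1) (I.labelA M x) (I.labelA N' x) +
      ∑ y, vote (I.rankB y.1) (I.labelB M y) (I.labelB N' y) := by
  have edges : ∑ e ∈ M, I.wtE N' e.1 e.2 =
      ∑ e ∈ M, vote (I.rankA e.1.1) (I.labelA M e.1) (I.labelA N' e.1) +
      ∑ e ∈ M, vote (I.rankB e.2.1) (I.labelB M e.2) (I.labelB N' e.2) := by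
    rw [← Finset.sum_add_distrib]
    refine Finset.sum_congr rfl fun e he => ?_
    rw [hM.labelA_eq_some_iff.2 ⟨_, he⟩, hM.labelB_eq_some_iff.2 ⟨_, he⟩]
    rfl
  have unmatchedA : (∑ x : I.CloneA,
      if ∀ y, (x, y) ∉ M then (if ∃ y, (x, y) ∈ N' then (-1 : ℤ) else 0) else 0) =
      ∑ x, if ∀ y, (x, y) ∉ M then vote (I.rankA x.1) (I.labelA M x) (I.labelA N' x) else 0 := by
    refine Finset.sum_congr rfl fun x _ => ite_congr rfl (fun hx => ?_) fun _ => rfl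
    simp only [labelA_eq_none_iff.2 hx, vote_none_left, labelA_eq_none_iff, ← not_exists, ite_not]
  have unmatchedB : (∑ y : I.CloneB,
      if ∀ x, (x, y) ∉ M then (if ∃ x, (x, y) ∈ N' then (-1 : ℤ) else 0) else 0) =
      ∑ y, if ∀ x, (x, y) ∉ M then vote (I.rankB y.1) (I.labelB M y) (I.labelB N' y) else 0 := by
    refine Finset.sum_congr rfl fun y _ => ite_congr rfl (fun hy => ?_) fun _ => rfl
    simp only [labelB_eq_none_iff.2 hy, vote_none_left, labelB_eq_none_iff, ← not_exists, ite_not]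
  rw [hM.sum_cloneA, hM.sum_cloneB, wtTotal, edges, unmatchedA, unmatchedB]
  ring

end IsCloneMatching

namespace IsRealization

variable {N : Finset (α × β)}

lemma isCloneMatching (hM : I.IsRealization N M) : I.IsCloneMatching M := ⟨hM.1, hM.2.1⟩

lemma mem_iff (hM : I.IsRealization N M) {a : α} {b : β} :
    (a, b) ∈ N ↔ ∃ i j, (⟨a, i⟩, ⟨b, j⟩) ∈ M := by
  rw [← hM.2.2.1, Finset.mem_image]
  constructor
  · rintro ⟨⟨⟨a, i⟩, ⟨b, j⟩⟩, he, rfl, rfl⟩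
    exact ⟨i, j, he⟩
  · rintro ⟨i, j, he⟩
    exact ⟨_, he, rfl⟩

lemma injOn_project (hM : I.IsRealization N M) :
    Set.InjOn (fun e : I.CloneA × I.CloneB => (e.1.1, e.2.1)) M :=
  Finset.card_image_iff.1 (by rw [hM.2.2.1, hM.2.2.2])

lemma isLabelling_labelA (hM : I.IsRealization N M) (a : α) :
    IsLabelling (fun i => I.labelA M ⟨a, i⟩) (rowSet N a) where
  mem_iff b := by
    simp only [rowSet, Finset.mem_filter, Finset.mem_univ, true_and, hM.mem_iff,
      hM.isCloneMatching.labelA_eq_some_iff]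
  injective h h' := by
    obtain ⟨j, hj⟩ := hM.isCloneMatching.labelA_eq_some_iff.1 h
    obtain ⟨j', hj'⟩ := hM.isCloneMatching.labelA_eq_some_iff.1 h'
    cases hM.injOn_project hj hj' rfl
    rfl

lemma isLabelling_labelB (hM : I.IsRealization N M) (b : β) :
    IsLabelling (fun j => I.labelB M ⟨b, j⟩) (colSet N b) where
  mem_iff a := by
    simp only [colSet, Finset.mem_filter, Finset.mem_univ, true_and, hM.mem_iff,
      hM.isCloneMatching.labelB_eq_some_iff]
    exact exists_comm
  injective h h' := by
    obtain ⟨i, hi⟩ := hM.isCloneMatching.labelB_eq_some_iff.1 h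
    obtain ⟨i', hi'⟩ := hM.isCloneMatching.labelB_eq_some_iff.1 h'
    cases hM.injOn_project hi hi' rfl
    rfl

end IsRealization

/-- The clone matching joining `x ∈ A'` and `y ∈ B'` whenever each is labelled by the vertex
underlying the other. -/
def ofLabels (qA : I.CloneA → Option β) (qB : I.CloneB → Option α) :
    Finset (I.CloneA × I.CloneB) :=
  Finset.univ.filter fun e => qA e.1 = some e.2.1 ∧ qB e.2 = some e.1.1

section OfLabels

variable {T : Finset (α × β)} {qA : I.CloneA → Option β} {qB : I.CloneB → Option α}

lemma mem_ofLabels : (x, y) ∈ ofLabels qA qB ↔ qA x = some y.1 ∧ qB y = some x.1 := by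
  simp [ofLabels]

lemma isRealization_ofLabels (hA : ∀ a, IsLabelling (fun i => qA ⟨a, i⟩) (rowSet T a))
    (hB : ∀ b, IsLabelling (fun j => qB ⟨b, j⟩) (colSet T b)) :
    I.IsRealization T (ofLabels qA qB) := by
  have project_injOn : Set.InjOn (fun e : I.CloneA × I.CloneB => (e.1.1, e.2.1))
      (ofLabels qA qB) := by
    rintro ⟨x, y⟩ he ⟨x', y'⟩ hf h
    rw [Finset.mem_coe, mem_ofLabels] at he hf
    obtain ⟨hx, hy⟩ : x.1 = x'.1 ∧ y.1 = y'.1 := Prod.ext_iff.1 h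
    rw [IsLabelling.eq_of_fst_eq hA he.1 (hy ▸ hf.1) hx,
      IsLabelling.eq_of_fst_eq hB he.2 (hx ▸ hf.2) hy]
  have project_image : (ofLabels qA qB).image (fun e => (e.1.1, e.2.1)) = T := by
    ext ⟨a, b⟩
    have hTA : (a, b) ∈ T ↔ ∃ i, qA ⟨a, i⟩ = some b := by simp [← (hA a).mem_iff, rowSet]
    have hTB : (a, b) ∈ T ↔ ∃ j, qB ⟨b, j⟩ = some a := by simp [← (hB b).mem_iff, colSet]
    rw [Finset.mem_image]
    constructor
    · rintro ⟨⟨⟨a, i⟩, ⟨b, j⟩⟩, he, rfl, rfl⟩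
      exact hTA.2 ⟨i, (mem_ofLabels.1 he).1⟩
    · intro h
      obtain ⟨i, hi⟩ := hTA.1 h
      obtain ⟨j, hj⟩ := hTB.1 h
      exact ⟨(⟨a, i⟩, ⟨b, j⟩), mem_ofLabels.2 ⟨hi, hj⟩, rfl⟩
  refine ⟨?_, ?_, project_image, ?_⟩
  · rintro ⟨x, y⟩ he ⟨-, y'⟩ hf rfl
    rw [mem_ofLabels] at he hf
    rw [IsLabelling.eq_of_fst_eq hB he.2 hf.2 (Option.some.inj (he.1.symm.trans hf.1))]
  · rintro ⟨x, y⟩ he ⟨x', -⟩ hf rfl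
    rw [mem_ofLabels] at he hf
    rw [IsLabelling.eq_of_fst_eq hA he.1 hf.1 (Option.some.inj (he.2.symm.trans hf.2))]
  · rw [← Finset.card_image_of_injOn project_injOn, project_image]

lemma labelA_ofLabels (hA : ∀ a, IsLabelling (fun i => qA ⟨a, i⟩) (rowSet T a))
    (hB : ∀ b, IsLabelling (fun j => qB ⟨b, j⟩) (colSet T b)) (x : I.CloneA) :
    I.labelA (ofLabels qA qB) x = qA x := by
  ext b
  rw [(isRealization_ofLabels hA hB).isCloneMatching.labelA_eq_some_iff]
  simp only [mem_ofLabels, exists_and_left, and_iff_left_iff_imp]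
  intro h
  rw [← (hB b).mem_iff]
  simpa [rowSet, colSet] using (hA x.1).mem_of_eq_some h

lemma labelB_ofLabels (hA : ∀ a, IsLabelling (fun i => qA ⟨a, i⟩) (rowSet T a))
    (hB : ∀ b, IsLabelling (fun j => qB ⟨b, j⟩) (colSet T b)) (y : I.CloneB) :
    I.labelB (ofLabels qA qB) y = qB y := by
  ext a
  rw [(isRealization_ofLabels hA hB).isCloneMatching.labelB_eq_some_iff]
  simp only [mem_ofLabels, exists_and_right, and_iff_right_iff_imp]
  intro h
  rw [← (hA a).mem_iff]
  simpa [rowSet, colSet] using (hB y.1).mem_of_eq_some h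

lemma gnEdge_of_mem_ofLabels (hTE : T ⊆ I.E) (hN' : I.IsRealization N N')
    (hA : ∀ a, IsLabelling (fun i => qA ⟨a, i⟩) (rowSet T a))
    (hB : ∀ b, IsLabelling (fun j => qB ⟨b, j⟩) (colSet T b))
    (hNA : ∀ x, ∀ b ∈ rowSet T x.1, I.labelA N' x = some b → qA x = some b)
    (hNB : ∀ y, ∀ a ∈ colSet T y.1, I.labelB N' y = some a → qB y = some a)
    (he : (x, y) ∈ ofLabels qA qB) : I.GNEdge N N' x y := by
  obtain ⟨hx, hy⟩ := mem_ofLabels.1 he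
  have hxT : y.1 ∈ rowSet T x.1 := (hA x.1).mem_of_eq_some hx
  have hyT : x.1 ∈ colSet T y.1 := (hB y.1).mem_of_eq_some hy
  by_cases hxy : (x.1, y.1) ∈ N
  · obtain ⟨i, j, hij⟩ := hN'.mem_iff.1 hxy
    have hi : x = ⟨x.1, i⟩ := IsLabelling.eq_of_fst_eq hA hx
      (hNA _ _ hxT (hN'.isCloneMatching.labelA_eq_some_iff.2 ⟨j, hij⟩)) rfl
    have hj : y = ⟨y.1, j⟩ := IsLabelling.eq_of_fst_eq hB hy
      (hNB _ _ hyT (hN'.isCloneMatching.labelB_eq_some_iff.2 ⟨i, hij⟩)) rfl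
    exact .inr (by rwa [← hi, ← hj] at hij)
  · exact .inl ⟨hTE (by simpa [rowSet] using hxT), hxy⟩

end OfLabels

variable {N T : Finset (α × β)}

lemma coe_rowSet_subset (h : T ⊆ I.E) (a : α) : ↑(rowSet T a) ⊆ {b | (a, b) ∈ I.E} :=
  fun b hb => h (by simpa [rowSet] using hb)

lemma coe_colSet_subset (h : T ⊆ I.E) (b : β) : ↑(colSet T b) ⊆ {a | (a, b) ∈ I.E} :=
  fun a ha => h (by simpa [colSet] using ha)

lemma delta_swap_le (hN : N ⊆ I.E) (hT : T ⊆ I.E) : I.Delta T N ≤ -I.Delta N T := by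
  rw [Delta, Delta, neg_add, ← Finset.sum_neg_distrib, ← Finset.sum_neg_distrib]
  exact add_le_add
    (Finset.sum_le_sum fun a _ => deltaSet_swap_le (I.rankA_injOn a)
      (coe_rowSet_subset hN a) (coe_rowSet_subset hT a))
    (Finset.sum_le_sum fun b _ => deltaSet_swap_le (I.rankB_injOn b)
      (coe_colSet_subset hN b) (coe_colSet_subset hT b))

/-- The optimal permutations in `Δ_u(N, T)` tell each clone of `u` which partner in `T` to take;
the clones carrying a common edge of `N` and `T` keep their partner. -/
lemma IsRealization.exists_wtTotal_eq_neg_delta (hN' : I.IsRealization N N') (hN : N ⊆ I.E)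
    (hT : I.IsMatching T) : ∃ T', I.IsRealization T T' ∧
      (∀ e ∈ T', I.GNEdge N N' e.1 e.2) ∧ I.wtTotal N' T' = -I.Delta N T := by
  choose qA hA hNA sumA using fun a => (hN'.isLabelling_labelA a).exists_sum_vote_eq
    (by simpa using hT.2.1 a) (I.rankA_injOn a) (coe_rowSet_subset hN a)
    (coe_rowSet_subset hT.1 a)
  choose qB hB hNB sumB using fun b => (hN'.isLabelling_labelB b).exists_sum_vote_eq
    (by simpa using hT.2.2 b) (I.rankB_injOn b) (coe_colSet_subset hN b)
    (coe_colSet_subset hT.1 b)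
  let pA (x : I.CloneA) := qA x.1 x.2
  let pB (y : I.CloneB) := qB y.1 y.2
  have hpA (a : α) : IsLabelling (fun i => pA ⟨a, i⟩) (rowSet T a) := hA a
  have hpB (b : β) : IsLabelling (fun j => pB ⟨b, j⟩) (colSet T b) := hB b
  have hT' : I.IsRealization T (ofLabels pA pB) := isRealization_ofLabels hpA hpB
  refine ⟨ofLabels pA pB, hT', fun e he => gnEdge_of_mem_ofLabels hT.1 hN' hpA hpB
    (fun x => hNA x.1 x.2) (fun y => hNB y.1 y.2) he, ?_⟩
  rw [hT'.isCloneMatching.wtTotal_eq_sum_vote]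
  simp only [labelA_ofLabels hpA hpB, labelB_ofLabels hpA hpB, Fintype.sum_sigma]
  simp only [pA, pB, sumA, sumB, Finset.sum_neg_distrib, Delta, DeltaA, DeltaB, neg_add]

/-! ### The dual solution of a 2-level witness -/

variable {lA : I.CloneA → Bool} {lB : I.CloneB → Bool}

/-- The dual variable of `x ∈ A'` in the linear program for a maximum-weight complete matching
in `G'_N`, read off from the level of `x`. -/
def dualA (N' : Finset (I.CloneA × I.CloneB)) (lA : I.CloneA → Bool) (x : I.CloneA) : ℤ :=
  if ∃ y, (x, y) ∈ N' then (if lA x then -1 else 1) else 0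

/-- The dual variable of `y ∈ B'`, with the signs opposite to those of `dualA`. -/
def dualB (N' : Finset (I.CloneA × I.CloneB)) (lB : I.CloneB → Bool) (y : I.CloneB) : ℤ :=
  if ∃ x, (x, y) ∈ N' then (if lB y then 1 else -1) else 0

namespace TwoLevelWitness

lemma sum_dual_eq_zero (hW : I.TwoLevelWitness N N' lA lB) (hN' : I.IsCloneMatching N') :
    ∑ x, dualA N' lA x + ∑ y, dualB N' lB y = 0 := by
  have edges : ∑ e ∈ N', dualA N' lA e.1 + ∑ e ∈ N', dualB N' lB e.2 = 0 := by
    rw [← Finset.sum_add_distrib]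
    refine Finset.sum_eq_zero fun e he => ?_
    have hx : ∃ y, (e.1, y) ∈ N' := ⟨e.2, he⟩
    have hy : ∃ x, (x, e.2) ∈ N' := ⟨e.1, he⟩
    rw [dualA, dualB, if_pos hx, if_pos hy, hW.2.2.1 e he]
    cases lB e.2 <;> rfl
  have unmatchedA : (∑ x, if ∀ y, (x, y) ∉ N' then dualA N' lA x else 0) = 0 := by
    refine Finset.sum_eq_zero fun x _ => ite_eq_right_iff.2 fun hx => if_neg ?_
    exact not_exists.2 hx
  have unmatchedB : (∑ y, if ∀ x, (x, y) ∉ N' then dualB N' lB y else 0) = 0 := by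
    refine Finset.sum_eq_zero fun y _ => ite_eq_right_iff.2 fun hy => if_neg ?_
    exact not_exists.2 hy
  rw [hN'.sum_cloneA, hN'.sum_cloneB, unmatchedA, unmatchedB]
  linarith

lemma wtE_lt_dual_of_unmatchedA (hW : I.TwoLevelWitness N N' lA lB) (hxy : I.GNEdge N N' x y)
    (hx : ∀ y, (x, y) ∉ N') : I.wtE N' x y < dualA N' lA x + dualB N' lB y := by
  obtain ⟨levelA, levelB, -, cross, same⟩ := hW
  have wt_nonneg : 0 ≤ I.wtE N' x y := by
    have : I.wtE N' x y = 1 + vote (I.rankB y.1) (some x.1) (I.labelB N' y) :=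
      congrArg (fun z => vote (I.rankA x.1) (some y.1) z + _) (labelA_eq_none_iff.2 hx)
    linarith [neg_one_le_vote (I.rankB y.1) (some x.1) (I.labelB N' y)]
  have hy : lB y = true := by
    by_contra h
    have := cross x y hxy (levelA x hx) (Bool.eq_false_of_not_eq_true h)
    omega
  have hy' : ∃ x, (x, y) ∈ N' := by
    by_contra! h
    exact absurd hy (by simp [levelB y h])
  have := same x y hxy ((levelA x hx).trans hy.symm)
  simp only [dualA, dualB, if_neg (not_exists.2 hx), if_pos hy', hy, ↓reduceIte]
  omega

lemma wtE_lt_dual_of_unmatchedB (hW : I.TwoLevelWitness N N' lA lB) (hxy : I.GNEdge N N' x y)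
    (hy : ∀ x, (x, y) ∉ N') : I.wtE N' x y < dualA N' lA x + dualB N' lB y := by
  obtain ⟨levelA, levelB, -, cross, same⟩ := hW
  have wt_nonneg : 0 ≤ I.wtE N' x y := by
    have : I.wtE N' x y = vote (I.rankA x.1) (some y.1) (I.labelA N' x) + 1 :=
      congrArg (fun z => _ + vote (I.rankB y.1) (some x.1) z) (labelB_eq_none_iff.2 hy)
    linarith [neg_one_le_vote (I.rankA x.1) (some y.1) (I.labelA N' x)]
  have hx : lA x = false := by
    by_contra h
    have := cross x y hxy (Bool.eq_true_of_not_eq_false h) (levelB y hy)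
    omega
  have hx' : ∃ y, (x, y) ∈ N' := by
    by_contra! h
    exact absurd hx (by simp [levelA x h])
  have := same x y hxy (hx.trans (levelB y hy).symm)
  simp only [dualA, dualB, if_neg (not_exists.2 hy), if_pos hx', hx,
    Bool.false_eq_true, ↓reduceIte]
  omega

lemma wtE_le_dual (hW : I.TwoLevelWitness N N' lA lB) (hxy : I.GNEdge N N' x y) :
    I.wtE N' x y ≤ dualA N' lA x + dualB N' lB y := by
  by_cases hx : ∃ y, (x, y) ∈ N'
  · by_cases hy : ∃ x, (x, y) ∈ N'
    · obtain ⟨-, -, -, cross, same⟩ := hW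
      have wt_le_two : I.wtE N' x y ≤ 1 + 1 := add_le_add (vote_le_one ..) (vote_le_one ..)
      rw [dualA, dualB, if_pos hx, if_pos hy]
      have := cross x y hxy
      have := same x y hxy
      grind
    · exact (hW.wtE_lt_dual_of_unmatchedB hxy (not_exists.1 hy)).le
  · exact (hW.wtE_lt_dual_of_unmatchedA hxy (not_exists.1 hx)).le

/-- Complementary slackness: the dual solution has value `0`, and the last-resort edges of `M`
can only contribute further slack. -/
lemma sum_slack_le (hW : I.TwoLevelWitness N N' lA lB) (hN' : I.IsCloneMatching N')
    (hM : I.IsCloneMatching M) :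
    ∑ e ∈ M, (dualA N' lA e.1 + dualB N' lB e.2 - I.wtE N' e.1 e.2) ≤ -I.wtTotal N' M := by
  have unmatchedA : (∑ x : I.CloneA,
      if ∀ y, (x, y) ∉ M then (if ∃ y, (x, y) ∈ N' then (-1 : ℤ) else 0) else 0) ≤
      ∑ x, if ∀ y, (x, y) ∉ M then dualA N' lA x else 0 := by
    refine Finset.sum_le_sum fun x _ => ?_
    simp only [dualA]
    split_ifs <;> omega
  have unmatchedB : (∑ y : I.CloneB,
      if ∀ x, (x, y) ∉ M then (if ∃ x, (x, y) ∈ N' then (-1 : ℤ) else 0) else 0) ≤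
      ∑ y, if ∀ x, (x, y) ∉ M then dualB N' lB y else 0 := by
    refine Finset.sum_le_sum fun y _ => ?_
    simp only [dualB]
    split_ifs <;> omega
  have dual_value := hW.sum_dual_eq_zero hN'
  rw [hM.sum_cloneA, hM.sum_cloneB] at dual_value
  rw [Finset.sum_sub_distrib, Finset.sum_add_distrib, wtTotal]
  linarith

lemma wtTotal_nonpos (hW : I.TwoLevelWitness N N' lA lB) (hN' : I.IsCloneMatching N')
    (hM : I.IsCloneMatching M) (hMG : ∀ e ∈ M, I.GNEdge N N' e.1 e.2) :
    I.wtTotal N' M ≤ 0 := by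
  have slack_nonneg := Finset.sum_nonneg fun e he => sub_nonneg.2 (hW.wtE_le_dual (hMG e he))
  linarith [hW.sum_slack_le hN' hM]

lemma wtE_eq_dual_of_wtTotal_nonneg (hW : I.TwoLevelWitness N N' lA lB)
    (hN' : I.IsCloneMatching N') (hM : I.IsCloneMatching M)
    (hMG : ∀ e ∈ M, I.GNEdge N N' e.1 e.2)
    (h : 0 ≤ I.wtTotal N' M) {e : I.CloneA × I.CloneB} (he : e ∈ M) :
    I.wtE N' e.1 e.2 = dualA N' lA e.1 + dualB N' lB e.2 := by
  have slack_nonneg := fun f hf => sub_nonneg.2 (hW.wtE_le_dual (hMG f hf))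
  have slack_le := Finset.single_le_sum slack_nonneg he
  linarith [hW.sum_slack_le hN' hM, slack_nonneg e he]

lemma labelA_ne_none_of_wtTotal_nonneg (hW : I.TwoLevelWitness N N' lA lB)
    (hN' : I.IsCloneMatching N') (hM : I.IsCloneMatching M)
    (hMG : ∀ e ∈ M, I.GNEdge N N' e.1 e.2)
    (h : 0 ≤ I.wtTotal N' M) (hx : I.labelA M x ≠ none) : I.labelA N' x ≠ none := by
  intro hx'
  rw [Ne, labelA_eq_none_iff] at hx
  push Not at hx
  obtain ⟨y, hy⟩ := hx
  exact (hW.wtE_lt_dual_of_unmatchedA (hMG _ hy) (labelA_eq_none_iff.1 hx')).ne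
    (hW.wtE_eq_dual_of_wtTotal_nonneg hN' hM hMG h hy)

lemma labelB_ne_none_of_wtTotal_nonneg (hW : I.TwoLevelWitness N N' lA lB)
    (hN' : I.IsCloneMatching N') (hM : I.IsCloneMatching M)
    (hMG : ∀ e ∈ M, I.GNEdge N N' e.1 e.2)
    (h : 0 ≤ I.wtTotal N' M) (hy : I.labelB M y ≠ none) : I.labelB N' y ≠ none := by
  intro hy'
  rw [Ne, labelB_eq_none_iff] at hy
  push Not at hy
  obtain ⟨x, hx⟩ := hy
  exact (hW.wtE_lt_dual_of_unmatchedB (hMG _ hx) (labelB_eq_none_iff.1 hy')).ne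
    (hW.wtE_eq_dual_of_wtTotal_nonneg hN' hM hMG h hx)

end TwoLevelWitness

end CloneMatching

lemma card_eq_sum_rowSet [Fintype α] [Fintype β] (M : Finset (α × β)) :
    M.card = ∑ a, (rowSet M a).card := by
  calc M.card = ∑ e, if e ∈ M then 1 else 0 := by simp
    _ = ∑ a, ∑ b, if (a, b) ∈ M then 1 else 0 := Fintype.sum_prod_type _
    _ = ∑ a, (rowSet M a).card := by simp only [rowSet, Finset.card_filter]

end PrefInstance

theorem statement8_general {α β : Type*} [Fintype α] [Fintype β] [DecidableEq α] [DecidableEq β]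
    (I : PrefInstance α β) (N : Finset (α × β)) (hN : I.IsMatching N)
    (N' : Finset (I.CloneA × I.CloneB)) (hN' : I.IsRealization N N')
    (lA : I.CloneA → Bool) (lB : I.CloneB → Bool)
    (hW : I.TwoLevelWitness N N' lA lB) :
    I.Popular N ∧
    ∀ T : Finset (α × β), I.IsMatching T → I.Delta N T ≤ 0 →
      (∀ a : α, (PrefInstance.rowSet T a).card ≤ (PrefInstance.rowSet N a).card) ∧
      (∀ b : β, (PrefInstance.colSet T b).card ≤ (PrefInstance.colSet N b).card) ∧
      T.card ≤ N.card := by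
  have hNc := hN'.isCloneMatching
  refine ⟨⟨hN, fun T hT => ?_⟩, fun T hT hNT => ?_⟩
  · obtain ⟨T', hT', hTG, hwt⟩ := hN'.exists_wtTotal_eq_neg_delta hN.1 hT
    linarith [hW.wtTotal_nonpos hNc hT'.isCloneMatching hTG]
  obtain ⟨T', hT', hTG, hwt⟩ := hN'.exists_wtTotal_eq_neg_delta hN.1 hT
  have wt_nonneg : 0 ≤ I.wtTotal N' T' := by linarith
  have row_le (a : α) := (hN'.isLabelling_labelA a).card_mono (hT'.isLabelling_labelA a)
    fun _ => hW.labelA_ne_none_of_wtTotal_nonneg hNc hT'.isCloneMatching hTG wt_nonneg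
  have col_le (b : β) := (hN'.isLabelling_labelB b).card_mono (hT'.isLabelling_labelB b)
    fun _ => hW.labelB_ne_none_of_wtTotal_nonneg hNc hT'.isCloneMatching hTG wt_nonneg
  refine ⟨row_le, col_le, ?_⟩
  rw [PrefInstance.card_eq_sum_rowSet T, PrefInstance.card_eq_sum_rowSet N]
  exact Finset.sum_le_sum fun a _ => row_le a

/-- Let `N` be a matching in `G` (with realization `N'`) that admits a
2-level witness. Then every popular matching `T` in `G` satisfies `|T(u)| ≤ |N(u)|` for
every vertex `u ∈ A ∪ B`; in particular `|T| ≤ |N|`, so `N` is a maximum-size popular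
matching in `G`. -/
theorem statement8 {α β : Type*} [Fintype α] [Fintype β] [DecidableEq α] [DecidableEq β]
    (I : PrefInstance α β) (N : Finset (α × β)) (hN : I.IsMatching N)
    (N' : Finset (I.CloneA × I.CloneB)) (hN' : I.IsRealization N N')
    (lA : I.CloneA → Bool) (lB : I.CloneB → Bool)
    (hW : I.TwoLevelWitness N N' lA lB) :
    I.Popular N ∧
    ∀ T : Finset (α × β), I.Popular T →
      (∀ a : α, (PrefInstance.rowSet T a).card ≤ (PrefInstance.rowSet N a).card) ∧
      (∀ b : β, (PrefInstance.colSet T b).card ≤ (PrefInstance.colSet N b).card) ∧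
      T.card ≤ N.card := by
  obtain ⟨hNpop, hbound⟩ := statement8_general I N hN N' hN' lA lB hW
  refine ⟨hNpop, fun T hT => hbound T hT.1 ?_⟩
  linarith [hT.2 N hN, PrefInstance.delta_swap_le hN.1 hT.1.1]
end

section
/- Every instance G = (A∪B, E) with capacities and strict preferences admits a popular matching M_0 such that: every popular matching of G has size at most |M_0|; Δ(M_0,T) > 0 for every matching T with |T| > |M_0| (so every weakly popular matching of G also has size at most |M_0|); and |M_0| ≥ (2/3)·|M_max|, where M_max is a maximum-size matching in G. -/
/-!
Replace every edge by two copies, of level `0` (`false`) and level `1` (`true`). A vertex of `A`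
prefers every level-`0` copy to every level-`1` copy, a vertex of `B` has the opposite taste, and
copies of equal level are compared by the original preferences. Deferred acceptance, in the form of
a monotone fixed point, yields a stable matching `M` of the copies using each edge at most once.

`Δ_u(M,T)` is the value of an assignment problem between `M(u) ∖ T(u)` and `T(u) ∖ M(u)`, so weak
duality bounds it below by any feasible choice of potentials. An edge of `M` gets the sign of its
level at its `A`-end and the opposite sign at its `B`-end. An edge of `T ∖ M` gets, for each of its
two copies, `-1` at an end that would accept the copy and `1` at an end that would not. The former
cancel, and the latter add up to a nonnegative number because by stability no copy is accepted at
both ends. What remains is the padding, which contributes at least `|T(u)| - |M(u)|` at every `u`;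
hence `Δ(M,T) ≥ 2 (|T| - |M|)` and `Δ(M,T) ≥ 0`.

For the ratio, if an edge of `T ∖ M` has an unsaturated `A`-end then its `B`-end is saturated by
level-`1` edges, so `|T| ≤ |M| + |{e ∈ M : e has level 1}|`. The same holds with `A`, `B` and the
two levels exchanged, and the sum of the two inequalities is `2 |T| ≤ 3 |M|`.
-/

open scoped Finset

/-! ### Counting along fibers -/

section Counting

theorem card_le_card_of_card_fiber_le {E V : Type*} [DecidableEq V] (f : E → V) {S T : Finset E}
    (h : ∀ v, #{e ∈ S | f e = v} ≤ #{e ∈ T | f e = v}) : #S ≤ #T := by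
  have maps_S : (S : Set E).MapsTo f (S.image f ∪ T.image f : Finset V) := fun e he =>
    Finset.mem_coe.2 (Finset.mem_union_left _ (Finset.mem_image_of_mem f he))
  have maps_T : (T : Set E).MapsTo f (S.image f ∪ T.image f : Finset V) := fun e he =>
    Finset.mem_coe.2 (Finset.mem_union_right _ (Finset.mem_image_of_mem f he))
  rw [Finset.card_eq_sum_card_fiberwise maps_S, Finset.card_eq_sum_card_fiberwise maps_T]
  exact Finset.sum_le_sum fun v _ => h v

theorem sum_tsub_sum_le_sum_tsub {V : Type*} (s : Finset V) (f g : V → ℕ) :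
    ∑ v ∈ s, f v - ∑ v ∈ s, g v ≤ ∑ v ∈ s, (f v - g v) := by
  rw [tsub_le_iff_left, ← Finset.sum_add_distrib]
  exact Finset.sum_le_sum fun v _ => le_add_tsub

end Counting

/-! ### Weak duality for `deltaSet` -/

section DeltaSet

variable {N : Type*} [DecidableEq N]

theorem kOf_comm_s11 (S₀ S₁ : Finset N) : kOf S₀ S₁ = kOf S₁ S₀ := by
  rw [kOf, kOf, max_comm, Finset.inter_comm]

theorem card_sdiff_le_kOf_s11 (S₀ S₁ : Finset N) : #(S₀ \ S₁) ≤ kOf S₀ S₁ := by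
  have := Finset.card_sdiff_add_card_inter S₀ S₁
  unfold kOf
  omega

theorem kOf_sub_card_sdiff (S₀ S₁ : Finset N) : kOf S₀ S₁ - #(S₀ \ S₁) = #S₁ - #S₀ := by
  have h₀ := Finset.card_sdiff_add_card_inter S₀ S₁
  have h₁ := Finset.card_sdiff_add_card_inter S₁ S₀
  rw [Finset.inter_comm] at h₁
  unfold kOf
  omega

theorem length_padded {S₀ S₁ : Finset N} {k : ℕ} (hk : #(S₀ \ S₁) ≤ k) :
    (padded S₀ S₁ k).length = k := by
  simp [padded, hk]

theorem sum_padded {S₀ S₁ : Finset N} {k : ℕ} (hk : #(S₀ \ S₁) ≤ k) (φ : Option N → ℤ) :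
    ∑ i : Fin k, φ ((padded S₀ S₁ k).getD i none) =
      ∑ x ∈ S₀ \ S₁, φ (some x) + (k - #(S₀ \ S₁) : ℕ) * φ none := by
  have hlen := length_padded hk
  calc ∑ i : Fin k, φ ((padded S₀ S₁ k).getD i none)
      = ∑ i : Fin (padded S₀ S₁ k).length, φ ((padded S₀ S₁ k).getD i none) := by rw [hlen]
    _ = ((padded S₀ S₁ k).map φ).sum := by
      rw [← Fin.sum_univ_fun_getElem]
      exact Finset.sum_congr rfl fun i _ => by rw [List.getD_eq_getElem _ _ i.2]
    _ = ∑ x ∈ S₀ \ S₁, φ (some x) + (k - #(S₀ \ S₁) : ℕ) * φ none := by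
      simp [padded, Function.comp_def, Finset.sum_map_toList]

theorem getD_padded_cases {S₀ S₁ : Finset N} {k i : ℕ} (hk : kOf S₀ S₁ = k) (hi : i < k) :
    (∃ x ∈ S₀ \ S₁, (padded S₀ S₁ k).getD i none = some x) ∨
      ((padded S₀ S₁ k).getD i none = none ∧ #S₀ < #S₁) := by
  subst hk
  have hmem : (padded S₀ S₁ (kOf S₀ S₁)).getD i none ∈ padded S₀ S₁ (kOf S₀ S₁) := by
    rw [← length_padded (card_sdiff_le_kOf_s11 S₀ S₁)] at hi
    rw [List.getD_eq_getElem _ _ hi]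
    exact List.getElem_mem hi
  generalize (padded S₀ S₁ (kOf S₀ S₁)).getD i none = z at hmem ⊢
  rw [padded, List.mem_append, List.mem_map, List.mem_replicate, kOf_sub_card_sdiff] at hmem
  rcases hmem with ⟨x, hx, hxz⟩ | ⟨hlt, hz⟩
  · exact Or.inl ⟨x, Finset.mem_toList.1 hx, hxz.symm⟩
  · exact Or.inr ⟨hz, by omega⟩

/-- Two nulls are never paired, because only the smaller set is padded. -/
theorem le_deltaSet (r : N → ℕ) (S₀ S₁ : Finset N) (φ ψ : Option N → ℤ)
    (hsome : ∀ x ∈ S₀ \ S₁, ∀ y ∈ S₁ \ S₀, φ (some x) + ψ (some y) ≤ vote r (some x) (some y))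
    (hnone_left : #S₀ < #S₁ → ∀ y ∈ S₁ \ S₀, φ none + ψ (some y) ≤ -1)
    (hnone_right : #S₁ < #S₀ → ∀ x ∈ S₀ \ S₁, φ (some x) + ψ none ≤ 1) :
    (∑ x ∈ S₀ \ S₁, φ (some x) + (#S₁ - #S₀ : ℕ) * φ none) +
      (∑ y ∈ S₁ \ S₀, ψ (some y) + (#S₀ - #S₁ : ℕ) * ψ none) ≤ deltaSet r S₀ S₁ := by
  refine Finset.le_inf' _ _ fun σ _ => ?_
  have hψ := sum_padded (card_sdiff_le_kOf_s11 S₁ S₀) ψ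
  rw [kOf_sub_card_sdiff, ← kOf_comm_s11 S₀ S₁] at hψ
  rw [← kOf_sub_card_sdiff, ← sum_padded (card_sdiff_le_kOf_s11 S₀ S₁) φ, ← hψ,
    ← Equiv.sum_comp σ fun i => ψ ((padded S₁ S₀ (kOf S₀ S₁)).getD i none),
    ← Finset.sum_add_distrib]
  refine Finset.sum_le_sum fun i _ => ?_
  rcases getD_padded_cases rfl i.2 with ⟨x, hx, hxi⟩ | ⟨hxi, hlt⟩ <;>
    rcases getD_padded_cases (kOf_comm_s11 S₁ S₀) (σ i).2 with ⟨y, hy, hyi⟩ | ⟨hyi, hgt⟩ <;>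
    rw [hxi, hyi]
  · exact hsome x hx y hy
  · exact hnone_right hgt x hx
  · exact hnone_left hlt y hy
  · exact absurd hlt hgt.asymm

theorem vote_add_vote_swap_nonpos (r : N → ℕ) (x y : Option N) : vote r x y + vote r y x ≤ 0 := by
  rcases x with _ | x <;> rcases y with _ | y
  case some.some =>
    rcases eq_or_ne x y with rfl | hne
    · simp [vote]
    · simp only [vote, if_neg hne, if_neg hne.symm]
      split_ifs <;> omega
  all_goals simp [vote]

theorem deltaSet_le_sum_vote (r : N → ℕ) {S₀ S₁ : Finset N} {k : ℕ} (hk : kOf S₀ S₁ = k) :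
    deltaSet r S₀ S₁ ≤
      ∑ i : Fin k, vote r ((padded S₀ S₁ k).getD i none) ((padded S₁ S₀ k).getD i none) := by
  subst hk
  exact Finset.inf'_le _ (Finset.mem_univ (1 : Equiv.Perm (Fin (kOf S₀ S₁))))

theorem deltaSet_add_deltaSet_swap_nonpos (r : N → ℕ) (S₀ S₁ : Finset N) :
    deltaSet r S₀ S₁ + deltaSet r S₁ S₀ ≤ 0 := by
  refine (add_le_add (deltaSet_le_sum_vote r rfl)
    (deltaSet_le_sum_vote r (kOf_comm_s11 S₁ S₀))).trans ?_
  rw [← Finset.sum_add_distrib]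
  exact Finset.sum_nonpos fun i _ => vote_add_vote_swap_nonpos r _ _

end DeltaSet

/-! ### Potentials from two levels -/

section Levels

/-- The potential of a matched edge of level `i` at the end that prefers level `false`. -/
def levelSign (i : Bool) : ℤ := if i then 1 else -1

theorem levelSign_not (i : Bool) : levelSign (!i) = -levelSign i := by
  cases i <;> rfl

open Classical in
/-- The potential of an unmatched edge at one of its ends, where `acc i` says that this end would
accept the copy of level `i`. -/
noncomputable def acceptPotential (acc : Bool → Prop) : ℤ :=
  ∑ i, if acc i then -1 else 1

theorem acceptPotential_comp_not (acc : Bool → Prop) :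
    acceptPotential (fun i => acc !i) = acceptPotential acc := by
  classical exact Equiv.sum_comp Equiv.boolNot fun i => if acc i then (-1 : ℤ) else 1

theorem acceptPotential_of_forall {acc : Bool → Prop} (h : ∀ i, acc i) :
    acceptPotential acc = -2 := by
  simp [acceptPotential, h]

theorem acceptPotential_add_nonneg {acc acc' : Bool → Prop} (h : ∀ i, ¬(acc i ∧ acc' i)) :
    0 ≤ acceptPotential acc + acceptPotential acc' := by
  rw [acceptPotential, acceptPotential, ← Finset.sum_add_distrib]
  refine Finset.sum_nonneg fun i _ => ?_
  have := h i
  split_ifs <;> first | omega | tauto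

variable {N : Type*} [DecidableEq N]

theorem levelSign_add_acceptPotential_le_vote {r : N → ℕ} {x y : N} (hr : r x ≠ r y) {level : Bool}
    {acc : Bool → Prop} (hacc : ∀ i, toLex (i, r y) < toLex (level, r x) → acc i) :
    levelSign level + acceptPotential acc ≤ vote r (some x) (some y) := by
  have hxy : x ≠ y := fun h => hr (congrArg r h)
  simp only [Prod.Lex.toLex_lt_toLex, Bool.forall_bool] at hacc
  simp only [levelSign, acceptPotential, vote, if_neg hxy, Fintype.sum_bool]
  rcases hr.lt_or_gt with hlt | hlt <;> cases level <;>
    simp only [hlt, hlt.not_gt, Bool.false_lt_true, lt_irrefl, and_true, and_false, or_true,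
      true_or, true_implies] at hacc ⊢ <;>
    split_ifs <;> grind

theorem sum_levelSign_add_sum_acceptPotential_le_deltaSet (r : N → ℕ) {S T : Finset N}
    (hr : ∀ x ∈ S \ T, ∀ y ∈ T \ S, r x ≠ r y) (level : N → Bool) (acc : N → Bool → Prop)
    (hspare : #S < #T → ∀ y ∈ T \ S, ∀ i, acc y i)
    (hacc : ∀ x ∈ S \ T, ∀ y ∈ T \ S, ∀ i, toLex (i, r y) < toLex (level x, r x) → acc y i) :
    ∑ x ∈ S \ T, levelSign (level x) + ∑ y ∈ T \ S, acceptPotential (acc y) + (#T - #S : ℕ) ≤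
      deltaSet r S T := by
  have duality := le_deltaSet r S T (fun x => x.elim 1 fun x => levelSign (level x))
    (fun y => y.elim 0 fun y => acceptPotential (acc y))
    (fun x hx y hy => levelSign_add_acceptPotential_le_vote (hr x hx y hy) (hacc x hx y hy))
    (fun hlt y hy => by simp [acceptPotential_of_forall (hspare hlt y hy)])
    (fun _ x _ => by cases h : level x <;> simp [levelSign, h])
  simp only [Option.elim, mul_one, mul_zero, add_zero] at duality
  linarith

end Levels

/-! ### Stable matchings of copies of edges -/

/-- Preferences and capacities of one side of a two-sided market in which each edge comes in
several copies, indexed by `ι`. The edge `e` ends at the agent `owner e`; agents prefer smaller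
keys. Only keys of copies with the same owner are meant to be compared. -/
structure MarketSide (E ι V K : Type*) where
  owner : E → V
  cap : V → ℕ
  key : E × ι → K

namespace MarketSide

section Choice

variable {E ι V K : Type*} [LinearOrder K] (S : MarketSide E ι V K)

/-- The edges with a copy on offer in `W` that the owner of `x` strictly prefers to `x`. -/
def betterEdges (W : Set (E × ι)) (x : E × ι) : Set E :=
  {e | S.owner e = S.owner x.1 ∧ ∃ i, (e, i) ∈ W ∧ S.key (e, i) < S.key x}

/-- The choice function of a side: from the offers in `W` each agent keeps the best copy of each
edge, and among these the best ones up to its capacity. -/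
def chosen (W : Set (E × ι)) : Set (E × ι) :=
  {x ∈ W | (∀ i, (x.1, i) ∈ W → S.key x ≤ S.key (x.1, i)) ∧
    (S.betterEdges W x).ncard < S.cap (S.owner x.1)}

/-- The preferences of every agent are strict on the offers in `W`. -/
def StrictOn (W : Set (E × ι)) : Prop :=
  W.InjOn fun x => (S.owner x.1, S.key x)

variable {S} {W W' : Set (E × ι)}

theorem chosen_subset : S.chosen W ⊆ W := fun _ hx => hx.1

theorem betterEdges_subset {x x' : E × ι} (hW : W ⊆ W') (howner : S.owner x.1 = S.owner x'.1)
    (hkey : S.key x ≤ S.key x') : S.betterEdges W x ⊆ S.betterEdges W' x' :=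
  fun _ ⟨he, i, hi, hlt⟩ => ⟨he.trans howner, i, hW hi, hlt.trans_le hkey⟩

theorem monotone_sdiff_chosen [Finite E] : Monotone fun W => W \ S.chosen W := by
  rintro W W' hW x ⟨hx, hrejected⟩
  refine ⟨hW hx, fun ⟨_, hbest, hcap⟩ => hrejected ⟨hx, fun i hi => hbest i (hW hi), ?_⟩⟩
  exact (Set.ncard_le_ncard (betterEdges_subset hW rfl le_rfl) (Set.toFinite _)).trans_lt hcap

theorem StrictOn.injOn_fst_chosen (hS : S.StrictOn W) : (S.chosen W).InjOn Prod.fst := by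
  rintro ⟨e, i⟩ hi ⟨_, j⟩ hj rfl
  exact hS hi.1 hj.1 (Prod.ext rfl (le_antisymm (hi.2.1 j hj.1) (hj.2.1 i hi.1)))

/-- The best copy of `e` on offer is not rejected in favor of another copy of `e`, so it is
rejected because the capacity is exhausted by better edges. -/
theorem cap_le_ncard_betterEdges [Finite E] [Finite ι] {e : E} {i : ι} (hW : (e, i) ∈ W)
    (hrejected : ∀ j, (e, j) ∉ S.chosen W) :
    S.cap (S.owner e) ≤ (S.betterEdges W (e, i)).ncard := by
  obtain ⟨best, hbest, hmin⟩ := Set.exists_min_image {j | (e, j) ∈ W} (fun j => S.key (e, j))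
    (Set.toFinite _) ⟨i, hW⟩
  calc S.cap (S.owner e)
      ≤ (S.betterEdges W (e, best)).ncard :=
        not_lt.1 fun hlt => hrejected best ⟨hbest, hmin, hlt⟩
    _ ≤ (S.betterEdges W (e, i)).ncard :=
        Set.ncard_le_ncard (betterEdges_subset subset_rfl rfl (hmin i hW)) (Set.toFinite _)

end Choice

section Matching

variable {E ι V K : Type*} [DecidableEq V] (S : MarketSide E ι V K)

/-- `M(v)`, as a set of edges. -/
def edgesAt (M : Finset E) (v : V) : Finset E := {e ∈ M | S.owner e = v}

theorem mem_edgesAt {M : Finset E} {v : V} {e : E} : e ∈ S.edgesAt M v ↔ e ∈ M ∧ S.owner e = v :=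
  Finset.mem_filter

/-- `M` respects the capacities of this side. -/
def Feasible (M : Finset E) : Prop := ∀ v, #(S.edgesAt M v) ≤ S.cap v

/-- If `M` uses the copy `l e` of each of its edges `e`, then the owner of `e` gains from taking
copy `i` of `e`: it has spare capacity or an edge worse than this copy. -/
def Accepts [LT K] (M : Finset E) (l : E → ι) (e : E) (i : ι) : Prop :=
  #(S.edgesAt M (S.owner e)) < S.cap (S.owner e) ∨
    ∃ e' ∈ S.edgesAt M (S.owner e), S.key (e, i) < S.key (e', l e')

variable {S} [LinearOrder K] [Finite E] {W : Set (E × ι)} {M : Finset E} {l : E → ι}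

theorem feasible_of_chosen_eq_graphOn (hS : S.StrictOn W)
    (hM : S.chosen W = (M : Set E).graphOn l) : S.Feasible M := by
  classical
  intro v
  have hchosen : ∀ e ∈ M, (e, l e) ∈ S.chosen W := fun e he => by simpa [hM] using he
  rcases (S.edgesAt M v).eq_empty_or_nonempty with hempty | hne
  · simp [hempty]
  obtain ⟨worst, hworst, hmax⟩ := Finset.exists_max_image _ (fun e => S.key (e, l e)) hne
  obtain ⟨hworstM, rfl⟩ := S.mem_edgesAt.1 hworst
  have hsub : ((S.edgesAt M (S.owner worst)).erase worst : Set E) ⊆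
      S.betterEdges W (worst, l worst) := by
    intro e he
    obtain ⟨hne, he⟩ := Finset.mem_erase.1 he
    obtain ⟨heM, howner⟩ := S.mem_edgesAt.1 he
    refine ⟨howner, l e, (hchosen e heM).1, (hmax e he).lt_of_ne fun hkey => hne ?_⟩
    exact congrArg Prod.fst
      (hS (hchosen e heM).1 (hchosen worst hworstM).1 (Prod.ext howner hkey))
  have hcard := Set.ncard_le_ncard hsub (Set.toFinite _)
  rw [Set.ncard_coe_finset, Finset.card_erase_of_mem hworst] at hcard
  have hcap : _ < S.cap (S.owner worst) := (hchosen worst hworstM).2.2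
  omega

theorem not_accepts_of_chosen_eq_graphOn [Finite ι] (hM : S.chosen W = (M : Set E).graphOn l)
    {e : E} {i : ι} (hW : (e, i) ∈ W) (he : e ∉ M) : ¬S.Accepts M l e i := by
  have hrejected : ∀ f ∉ M, ∀ j, (f, j) ∉ S.chosen W := fun f hf j h => by
    rw [hM, Set.mem_graphOn] at h
    exact hf h.1
  rintro (hspare | ⟨e', he', hlt⟩)
  · obtain ⟨⟨f, j⟩, ⟨hfW, howner, hf⟩, hmin⟩ := Set.exists_min_image
      {x | x ∈ W ∧ S.owner x.1 = S.owner e ∧ x.1 ∉ M} S.key (Set.toFinite _) ⟨(e, i), hW, rfl, he⟩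
    have hsub : S.betterEdges W (f, j) ⊆ S.edgesAt M (S.owner f) := by
      rintro g ⟨hg, k, hgW, hkey⟩
      by_contra hgM
      rw [Finset.mem_coe, mem_edgesAt] at hgM
      exact hkey.not_ge (hmin (g, k) ⟨hgW, hg.trans howner, fun h => hgM ⟨h, hg⟩⟩)
    have hcard := Set.ncard_le_ncard hsub (Set.toFinite _)
    rw [Set.ncard_coe_finset] at hcard
    rw [← howner] at hspare
    exact hspare.not_ge ((cap_le_ncard_betterEdges hfW (hrejected f hf)).trans hcard)
  · obtain ⟨he'M, howner⟩ := S.mem_edgesAt.1 he'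
    have hchosen : (e', l e') ∈ S.chosen W := by simpa [hM] using he'M
    refine hchosen.2.2.not_ge ?_
    rw [howner]
    exact (cap_le_ncard_betterEdges hW (hrejected e he)).trans
      (Set.ncard_le_ncard (betterEdges_subset subset_rfl howner.symm hlt.le) (Set.toFinite _))

end Matching

/-- `M`, with the copy `l e` used for `e ∈ M`, is a matching in `G`, and no copy of an edge of `G`
outside `M` is accepted by both of its ends. -/
structure IsStable {E ι V₁ V₂ K₁ K₂ : Type*} [DecidableEq V₁] [DecidableEq V₂] [LT K₁] [LT K₂]
    (S₁ : MarketSide E ι V₁ K₁) (S₂ : MarketSide E ι V₂ K₂) (G M : Finset E) (l : E → ι) :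
    Prop where
  subset : M ⊆ G
  feasible_left : S₁.Feasible M
  feasible_right : S₂.Feasible M
  not_accepts : ∀ e ∈ G, e ∉ M → ∀ i, ¬(S₁.Accepts M l e i ∧ S₂.Accepts M l e i)

theorem IsStable.symm {E ι V₁ V₂ K₁ K₂ : Type*} [DecidableEq V₁] [DecidableEq V₂] [LT K₁] [LT K₂]
    {S₁ : MarketSide E ι V₁ K₁} {S₂ : MarketSide E ι V₂ K₂} {G M : Finset E} {l : E → ι}
    (h : IsStable S₁ S₂ G M l) : IsStable S₂ S₁ G M l :=
  ⟨h.subset, h.feasible_right, h.feasible_left, fun e he heM i hacc =>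
    h.not_accepts e he heM i hacc.symm⟩

end MarketSide

/-- Deferred acceptance for substitutable choice functions: `X` and `Y` are what remains on offer to
the second and to the first side when each side withdraws what it rejects. -/
theorem exists_union_eq_and_choice_eq {P : Type*} {C₁ C₂ : Set P → Set P} (hC₁ : ∀ W, C₁ W ⊆ W)
    (hC₂ : ∀ W, C₂ W ⊆ W) (hmono₁ : Monotone fun W => W \ C₁ W)
    (hmono₂ : Monotone fun W => W \ C₂ W) (G : Set P) :
    ∃ X Y, X ∪ Y = G ∧ C₁ Y = C₂ X := by
  let round : Set P →o Set P :=
    { toFun := fun X => G \ ((G \ (X \ C₂ X)) \ C₁ (G \ (X \ C₂ X)))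
      monotone' := fun _ _ h => Set.sdiff_subset_sdiff_right
        (hmono₁ (Set.sdiff_subset_sdiff_right (hmono₂ h))) }
  obtain ⟨X, hX⟩ : ∃ X, round X = X := ⟨_, round.map_lfp⟩
  obtain ⟨Y, hY⟩ : ∃ Y, Y = G \ (X \ C₂ X) := ⟨_, rfl⟩
  have hX : G \ (Y \ C₁ Y) = X := by rw [hY]; exact hX
  simp only [Set.ext_iff, Set.mem_sdiff] at hX hY
  refine ⟨X, Y, Set.ext fun p => ?_, Set.ext fun p => ?_⟩ <;>
    have hX := hX p <;> have hY := hY p <;> have h₁ := @hC₁ Y p <;> have h₂ := @hC₂ X p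
  · rw [Set.mem_union]
    tauto
  · tauto

namespace MarketSide

variable {E ι V₁ V₂ K₁ K₂ : Type*} [DecidableEq V₁] [DecidableEq V₂] [LinearOrder K₁]
  [LinearOrder K₂] {S₁ : MarketSide E ι V₁ K₁} {S₂ : MarketSide E ι V₂ K₂}

theorem exists_isStable [Finite E] [Finite ι] [Nonempty ι] (G : Finset E)
    (hS₁ : S₁.StrictOn {x | x.1 ∈ G}) (hS₂ : S₂.StrictOn {x | x.1 ∈ G}) :
    ∃ M l, IsStable S₁ S₂ G M l := by
  obtain ⟨X, Y, hunion, hchosen⟩ := exists_union_eq_and_choice_eq (C₁ := S₁.chosen)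
    (C₂ := S₂.chosen) (fun _ => chosen_subset) (fun _ => chosen_subset) monotone_sdiff_chosen
    monotone_sdiff_chosen {x : E × ι | x.1 ∈ G}
  have hXG : X ⊆ {x | x.1 ∈ G} := hunion ▸ Set.subset_union_left
  have hYG : Y ⊆ {x | x.1 ∈ G} := hunion ▸ Set.subset_union_right
  obtain ⟨l, M, hY⟩ := Set.exists_eq_graphOn.2 (StrictOn.injOn_fst_chosen (hS₁.mono hYG))
  lift M to Finset E using Set.toFinite M
  have hX : S₂.chosen X = (M : Set E).graphOn l := hchosen.symm.trans hY
  refine ⟨M, l, fun e he => ?_, feasible_of_chosen_eq_graphOn (hS₁.mono hYG) hY,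
    feasible_of_chosen_eq_graphOn (hS₂.mono hXG) hX, fun e he heM i => ?_⟩
  · have hmem : (e, l e) ∈ S₁.chosen Y := by simpa [hY] using he
    exact hYG hmem.1
  · rintro ⟨hacc₁, hacc₂⟩
    have hmem : (e, i) ∈ X ∪ Y := by rw [hunion]; exact he
    rcases hmem with hmem | hmem
    · exact not_accepts_of_chosen_eq_graphOn hX hmem heM hacc₂
    · exact not_accepts_of_chosen_eq_graphOn hY hmem heM hacc₁

/-- The edges of `T` outside `M` at unsaturated agents of the first side end at agents of the second
side that are saturated by copies of the index `best`. -/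
theorem IsStable.card_le_card_add_card_filter [DecidableEq ι] {G M T : Finset E}
    {l : E → ι} (hM : IsStable S₁ S₂ G M l) {best : ι}
    (hbest : ∀ e e' i, i ≠ best → S₂.key (e, best) < S₂.key (e', i)) (hTG : T ⊆ G)
    (hT₁ : S₁.Feasible T) (hT₂ : S₂.Feasible T) : #T ≤ #M + #{e ∈ M | l e = best} := by
  classical
  let U : Finset E := {e ∈ T \ M | #(S₁.edgesAt M (S₁.owner e)) < S₁.cap (S₁.owner e)}
  have hmemU : ∀ e, e ∈ U ↔ (e ∈ T ∧ e ∉ M) ∧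
      #(S₁.edgesAt M (S₁.owner e)) < S₁.cap (S₁.owner e) := fun e => by simp [U]
  have hUT : U ⊆ T := fun e he => ((hmemU e).1 he).1.1
  have card_sdiff_le : #(T \ U) ≤ #M := by
    refine card_le_card_of_card_fiber_le S₁.owner fun v => ?_
    rcases lt_or_ge #(S₁.edgesAt M v) (S₁.cap v) with hlt | hge
    · refine Finset.card_le_card fun e he => ?_
      simp only [Finset.mem_filter, Finset.mem_sdiff, hmemU] at he ⊢
      obtain ⟨⟨heT, heU⟩, rfl⟩ := he
      exact ⟨by_contra fun heM => heU ⟨⟨heT, heM⟩, hlt⟩, rfl⟩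
    · exact (Finset.card_le_card (Finset.filter_subset_filter _ Finset.sdiff_subset)).trans
        ((hT₁ v).trans hge)
  have card_le : #U ≤ #{e ∈ M | l e = best} := by
    refine card_le_card_of_card_fiber_le S₂.owner fun w => ?_
    rcases Finset.eq_empty_or_nonempty {e ∈ U | S₂.owner e = w} with hempty | ⟨e, he⟩
    · simp [hempty]
    obtain ⟨heU, rfl⟩ := Finset.mem_filter.1 he
    obtain ⟨⟨heT, heM⟩, hspare⟩ := (hmemU e).1 heU
    have hrefuses : ¬S₂.Accepts M l e best := fun hacc =>
      hM.not_accepts e (hTG heT) heM best ⟨Or.inl hspare, hacc⟩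
    have hsub : S₂.edgesAt M (S₂.owner e) ⊆
        {e' ∈ {e ∈ M | l e = best} | S₂.owner e' = S₂.owner e} := by
      intro e' he'
      obtain ⟨he'M, howner⟩ := S₂.mem_edgesAt.1 he'
      refine Finset.mem_filter.2 ⟨Finset.mem_filter.2 ⟨he'M, by_contra fun hl => ?_⟩, howner⟩
      exact hrefuses (Or.inr ⟨e', he', hbest e e' _ hl⟩)
    calc #{e' ∈ U | S₂.owner e' = S₂.owner e}
        ≤ #(S₂.edgesAt T (S₂.owner e)) := Finset.card_le_card (Finset.filter_subset_filter _ hUT)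
      _ ≤ S₂.cap (S₂.owner e) := hT₂ _
      _ ≤ #(S₂.edgesAt M (S₂.owner e)) := not_lt.1 fun hlt => hrefuses (Or.inl hlt)
      _ ≤ _ := Finset.card_le_card hsub
  have := Finset.card_sdiff_add_card_eq_card hUT
  omega

end MarketSide

/-! ### The two-level market of an instance -/

namespace PrefInstance

section BipartiteSums

variable {α β R : Type*} [Fintype α] [Fintype β] [DecidableEq α] [DecidableEq β] [AddCommMonoid R]

theorem sum_sum_rowSet (S : Finset (α × β)) (f : α × β → R) :
    ∑ a, ∑ b ∈ rowSet S a, f (a, b) = ∑ e ∈ S, f e :=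
  (Finset.sum_finset_product S Finset.univ (rowSet S) (by simp [rowSet])).symm

theorem sum_sum_colSet (S : Finset (α × β)) (f : α × β → R) :
    ∑ b, ∑ a ∈ colSet S b, f (a, b) = ∑ e ∈ S, f e :=
  (Finset.sum_finset_product_right S Finset.univ (colSet S) (by simp [colSet])).symm

end BipartiteSums

section RowsAndColumns

variable {α β : Type*} [DecidableEq α] [DecidableEq β]

theorem mem_rowSet [Fintype β] {M : Finset (α × β)} {a : α} {b : β} :
    b ∈ rowSet M a ↔ (a, b) ∈ M := by
  simp [rowSet]

theorem mem_colSet [Fintype α] {M : Finset (α × β)} {a : α} {b : β} :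
    a ∈ colSet M b ↔ (a, b) ∈ M := by
  simp [colSet]

theorem rowSet_sdiff [Fintype β] (M T : Finset (α × β)) (a : α) :
    rowSet (M \ T) a = rowSet M a \ rowSet T a := by
  ext; simp [mem_rowSet]

theorem colSet_sdiff [Fintype α] (M T : Finset (α × β)) (b : β) :
    colSet (M \ T) b = colSet M b \ colSet T b := by
  ext; simp [mem_colSet]

end RowsAndColumns

variable {α β : Type*} [Fintype α] [Fintype β] [DecidableEq α] [DecidableEq β]

theorem card_tsub_card_le_sum_rowSet (M T : Finset (α × β)) :
    #T - #M ≤ ∑ a, (#(rowSet T a) - #(rowSet M a)) := by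
  have hcard : ∀ S : Finset (α × β), ∑ a, #(rowSet S a) = #S := fun S => by
    simpa only [Finset.card_eq_sum_ones] using sum_sum_rowSet S fun _ => (1 : ℕ)
  rw [← hcard T, ← hcard M]
  exact sum_tsub_sum_le_sum_tsub _ _ _

theorem card_tsub_card_le_sum_colSet (M T : Finset (α × β)) :
    #T - #M ≤ ∑ b, (#(colSet T b) - #(colSet M b)) := by
  have hcard : ∀ S : Finset (α × β), ∑ b, #(colSet S b) = #S := fun S => by
    simpa only [Finset.card_eq_sum_ones] using sum_sum_colSet S fun _ => (1 : ℕ)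
  rw [← hcard T, ← hcard M]
  exact sum_tsub_sum_le_sum_tsub _ _ _

variable (I : PrefInstance α β)

/-- The vertices of `A` in the market with two copies of each edge: level `false` comes before
level `true`, and the original preferences decide within a level. -/
def sideA : MarketSide (α × β) Bool α (Bool ×ₗ ℕ) where
  owner := Prod.fst
  cap := I.capA
  key x := toLex (x.2, I.rankA x.1.1 x.1.2)

/-- The vertices of `B` in the market with two copies of each edge: level `true` comes before
level `false`, and the original preferences decide within a level. -/
def sideB : MarketSide (α × β) Bool β (Bool ×ₗ ℕ) where
  owner := Prod.snd
  cap := I.capB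
  key x := toLex (!x.2, I.rankB x.1.2 x.1.1)

theorem strictOn_sideA : I.sideA.StrictOn {x | x.1 ∈ I.E} := by
  rintro ⟨⟨a, b⟩, i⟩ hb ⟨⟨a', b'⟩, j⟩ hb' h
  simp only [sideA, Prod.mk.injEq, toLex_inj] at h
  obtain ⟨rfl, rfl, hrank⟩ := h
  rw [I.rankA_injOn a hb hb' hrank]

theorem strictOn_sideB : I.sideB.StrictOn {x | x.1 ∈ I.E} := by
  rintro ⟨⟨a, b⟩, i⟩ ha ⟨⟨a', b'⟩, j⟩ ha' h
  simp only [sideB, Prod.mk.injEq, toLex_inj, Bool.not_inj_iff] at h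
  obtain ⟨rfl, rfl, hrank⟩ := h
  rw [I.rankB_injOn b ha ha' hrank]

theorem edgesAt_sideA (M : Finset (α × β)) (a : α) :
    I.sideA.edgesAt M a = (rowSet M a).map (.sectR a β) := by
  ext ⟨a', b⟩
  simp only [MarketSide.mem_edgesAt, sideA, Finset.mem_map, mem_rowSet,
    Function.Embedding.sectR_apply, Prod.mk.injEq]
  grind

theorem edgesAt_sideB (M : Finset (α × β)) (b : β) :
    I.sideB.edgesAt M b = (colSet M b).map (.sectL α b) := by
  ext ⟨a, b'⟩
  simp only [MarketSide.mem_edgesAt, sideB, Finset.mem_map, mem_colSet,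
    Function.Embedding.sectL_apply, Prod.mk.injEq]
  grind

theorem isMatching_iff_feasible {M : Finset (α × β)} :
    I.IsMatching M ↔ M ⊆ I.E ∧ I.sideA.Feasible M ∧ I.sideB.Feasible M := by
  simp only [IsMatching, MarketSide.Feasible, edgesAt_sideA, edgesAt_sideB, Finset.card_map]
  rfl

/-- A stable matching of the market with two copies of each edge. -/
def TwoLevelStable (M : Finset (α × β)) (l : α × β → Bool) : Prop :=
  MarketSide.IsStable I.sideA I.sideB I.E M l

theorem exists_twoLevelStable : ∃ M l, I.TwoLevelStable M l :=
  MarketSide.exists_isStable I.E I.strictOn_sideA I.strictOn_sideB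

variable {I} {M T : Finset (α × β)} {l : α × β → Bool}

theorem TwoLevelStable.isMatching (hM : I.TwoLevelStable M l) : I.IsMatching M :=
  I.isMatching_iff_feasible.2 ⟨hM.subset, hM.feasible_left, hM.feasible_right⟩

/-! ### Popularity and size of two-level stable matchings -/

theorem le_DeltaA (hM : M ⊆ I.E) (hT : I.IsMatching T) (a : α) :
    ∑ b ∈ rowSet (M \ T) a, levelSign (l (a, b)) +
      ∑ b ∈ rowSet (T \ M) a, acceptPotential (I.sideA.Accepts M l (a, b)) +
      (#(rowSet T a) - #(rowSet M a) : ℕ) ≤ I.DeltaA M T a := by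
  rw [rowSet_sdiff, rowSet_sdiff]
  refine sum_levelSign_add_sum_acceptPotential_le_deltaSet (I.rankA a) (fun b hb b' hb' hrank => ?_)
    (fun b => l (a, b)) (fun b => I.sideA.Accepts M l (a, b)) (fun hlt b _ i => Or.inl ?_)
    (fun b hb b' _ i hlt => Or.inr ⟨(a, b), ?_, hlt⟩)
  · rw [Finset.mem_sdiff, mem_rowSet] at hb hb'
    obtain rfl := I.rankA_injOn a (hM hb.1) (hT.1 hb'.1) hrank
    exact hb'.2 (mem_rowSet.2 hb.1)
  · rw [edgesAt_sideA, Finset.card_map]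
    exact hlt.trans_le (hT.2.1 a)
  · exact I.sideA.mem_edgesAt.2 ⟨mem_rowSet.1 (Finset.mem_sdiff.1 hb).1, rfl⟩

theorem le_DeltaB (hM : M ⊆ I.E) (hT : I.IsMatching T) (b : β) :
    ∑ a ∈ colSet (M \ T) b, -levelSign (l (a, b)) +
      ∑ a ∈ colSet (T \ M) b, acceptPotential (I.sideB.Accepts M l (a, b)) +
      (#(colSet T b) - #(colSet M b) : ℕ) ≤ I.DeltaB M T b := by
  rw [colSet_sdiff, colSet_sdiff]
  simp only [← levelSign_not, ← acceptPotential_comp_not (I.sideB.Accepts M l _)]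
  refine sum_levelSign_add_sum_acceptPotential_le_deltaSet (I.rankB b) (fun a ha a' ha' hrank => ?_)
    (fun a => !l (a, b)) (fun a i => I.sideB.Accepts M l (a, b) !i) (fun hlt a _ i => Or.inl ?_)
    (fun a ha a' _ i hlt => Or.inr ⟨(a, b), ?_, by simpa [sideB] using hlt⟩)
  · rw [Finset.mem_sdiff, mem_colSet] at ha ha'
    obtain rfl := I.rankB_injOn b (hM ha.1) (hT.1 ha'.1) hrank
    exact ha'.2 (mem_colSet.2 ha.1)
  · rw [edgesAt_sideB, Finset.card_map]
    exact hlt.trans_le (hT.2.2 b)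
  · exact I.sideB.mem_edgesAt.2 ⟨mem_colSet.1 (Finset.mem_sdiff.1 ha).1, rfl⟩

theorem TwoLevelStable.two_mul_card_tsub_card_le_Delta (hM : I.TwoLevelStable M l)
    (hT : I.IsMatching T) : (2 * (#T - #M) : ℕ) ≤ I.Delta M T := by
  have hA := Finset.sum_le_sum fun a (_ : a ∈ Finset.univ) => le_DeltaA (l := l) hM.subset hT a
  have hB := Finset.sum_le_sum fun b (_ : b ∈ Finset.univ) => le_DeltaB (l := l) hM.subset hT b
  simp only [Finset.sum_add_distrib, ← Nat.cast_sum,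
    sum_sum_rowSet (M \ T) fun e => levelSign (l e),
    sum_sum_rowSet (T \ M) fun e => acceptPotential (I.sideA.Accepts M l e)] at hA
  simp only [Finset.sum_add_distrib, ← Nat.cast_sum,
    sum_sum_colSet (M \ T) fun e => levelSign (l e), Finset.sum_neg_distrib,
    sum_sum_colSet (T \ M) fun e => acceptPotential (I.sideB.Accepts M l e)] at hB
  have potential_nonneg : 0 ≤ ∑ e ∈ T \ M, acceptPotential (I.sideA.Accepts M l e) +
      ∑ e ∈ T \ M, acceptPotential (I.sideB.Accepts M l e) := by
    rw [← Finset.sum_add_distrib]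
    refine Finset.sum_nonneg fun e he => acceptPotential_add_nonneg ?_
    rw [Finset.mem_sdiff] at he
    exact hM.not_accepts e (hT.1 he.1) he.2
  have hrow := card_tsub_card_le_sum_rowSet M T
  have hcol := card_tsub_card_le_sum_colSet M T
  unfold Delta
  omega

theorem TwoLevelStable.popular (hM : I.TwoLevelStable M l) : I.Popular M :=
  ⟨hM.isMatching, fun _ hT => (Int.natCast_nonneg _).trans (hM.two_mul_card_tsub_card_le_Delta hT)⟩

theorem TwoLevelStable.Delta_pos (hM : I.TwoLevelStable M l) (hT : I.IsMatching T)
    (hlt : #M < #T) : 0 < I.Delta M T := by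
  have := hM.two_mul_card_tsub_card_le_Delta hT
  omega

theorem TwoLevelStable.two_mul_card_le (hM : I.TwoLevelStable M l) (hT : I.IsMatching T) :
    2 * #T ≤ 3 * #M := by
  obtain ⟨hTE, hTA, hTB⟩ := I.isMatching_iff_feasible.1 hT
  have h_true : #T ≤ #M + #{e ∈ M | l e = true} :=
    MarketSide.IsStable.card_le_card_add_card_filter hM
      (fun e e' i hi => by simp [sideB, Prod.Lex.toLex_lt_toLex, hi]) hTE hTA hTB
  have h_false : #T ≤ #M + #{e ∈ M | l e = false} :=
    (MarketSide.IsStable.symm hM).card_le_card_add_card_filter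
      (fun e e' i hi => by simp [sideA, Prod.Lex.toLex_lt_toLex, hi]) hTE hTB hTA
  have hsplit := Finset.card_filter_add_card_filter_not (s := M) fun e => l e = true
  simp only [Bool.not_eq_true] at hsplit
  omega

theorem Delta_add_Delta_swap_nonpos (I : PrefInstance α β) (M T : Finset (α × β)) :
    I.Delta M T + I.Delta T M ≤ 0 := by
  calc I.Delta M T + I.Delta T M
      = ∑ a, (I.DeltaA M T a + I.DeltaA T M a) + ∑ b, (I.DeltaB M T b + I.DeltaB T M b) := by
        simp only [Delta, Finset.sum_add_distrib]
        ring
    _ ≤ 0 := add_nonpos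
        (Finset.sum_nonpos fun _ _ => deltaSet_add_deltaSet_swap_nonpos _ _ _)
        (Finset.sum_nonpos fun _ _ => deltaSet_add_deltaSet_swap_nonpos _ _ _)

theorem Popular.weaklyPopular (hM : I.Popular M) : I.WeaklyPopular M :=
  ⟨hM.1, fun T hT => by linarith [hM.2 T hT, I.Delta_add_Delta_swap_nonpos M T]⟩

end PrefInstance

/-- Every instance `G` admits a popular matching `M₀` such that every
popular matching of `G` has size at most `|M₀|`, `Δ(M₀,T) > 0` for every matching `T`
with `|T| > |M₀|` (so every weakly popular matching also has size at most `|M₀|`), and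
`|M₀| ≥ (2/3)·|M_max|` for a maximum-size matching `M_max` of `G`. -/
theorem statement11 {α β : Type*} [Fintype α] [Fintype β] [DecidableEq α] [DecidableEq β]
    (I : PrefInstance α β)
    (Mmax : Finset (α × β)) (hMmax : I.IsMatching Mmax)
    (hmax : ∀ T, I.IsMatching T → T.card ≤ Mmax.card) :
    ∃ M₀ : Finset (α × β), I.Popular M₀ ∧
      (∀ T : Finset (α × β), I.Popular T → T.card ≤ M₀.card) ∧
      (∀ T : Finset (α × β), I.IsMatching T → M₀.card < T.card → 0 < I.Delta M₀ T) ∧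
      (∀ T : Finset (α × β), I.WeaklyPopular T → T.card ≤ M₀.card) ∧
      2 * Mmax.card ≤ 3 * M₀.card := by
  obtain ⟨M₀, l, hM₀⟩ := I.exists_twoLevelStable
  have card_le_of_weaklyPopular : ∀ T, I.WeaklyPopular T → T.card ≤ M₀.card := fun T hT =>
    not_lt.1 fun hlt => (hM₀.Delta_pos hT.1 hlt).not_ge (hT.2 M₀ hM₀.isMatching)
  exact ⟨M₀, hM₀.popular, fun T hT => card_le_of_weaklyPopular T hT.weaklyPopular,
    fun T hT => hM₀.Delta_pos hT, card_le_of_weaklyPopular, hM₀.two_mul_card_le hMmax⟩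
end
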